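/- There exists an absolute constant c₀ > 0 such that the following holds. For any integers m ≥ 2, O ≥ S ≥ 8, A ≥ 3, any horizon H with H ≥ 8·log₂ S + 2m, any α ∈ (0, 0.1], and any T ≥ 1, there exists a finite family ℳ of finite episodic POMDPs with horizon H, with |𝒮| ≤ S, |𝒪| ≤ O, |𝒜| = A, each of which is m-step α-revealing, such that for every T-episode algorithm 𝔄: max_{M∈ℳ} E_M^𝔄[Regret] ≥ (c₀/m) · min{ (S·O^{1/2}·A^m·H/α²)^{1/3}·T^{2/3}, (S·A^{H/2}·H·T)^{1/2}, T }. -/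

import Mathlib

/-!
The lower bound comes from a family of combination locks whose lock can either be tested directly,
at a negligible cost and with negligible success, or through a costly and noisy signal.

**The instances** (`combinationLock`). The first part of an episode walks on `2 ^ k` visible
register states, a binary shift register, so that every register can be reached. Any non-shift
action leaves the registers and tosses a hidden coin. The coin is fair, except at one hidden
location (step, register, action) where it has bias `ε`. Afterwards a hidden password of `L`
actions has to be entered; a wrong letter tosses a fair coin. The reward is the coin, shown at the
last step, so the optimal value is at least `1 / 2 + ε`, and any episode that misses the location
or the password earns at most `1 / 2`. Instead of going on, the learner may play one of the
`r = A / 3` reveal actions. This shows one of `2 n` signals `(i, ±)`, whose sign agrees with a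
secret sign `v i` with correlation `±σ` given by the coin, and then the episode is dead, with no
reward.

**Revealing property** (`isRevealing_combinationLock`). The only invisible quantity is the side of
the coin. It is recovered without bias, with magnitude `1 / σ`, from the observation that follows
a reveal. Averaging over all `r A ^ (m - 2)` action sequences that begin with a reveal gives a
left inverse of norm `1 / (σ √(r A ^ (m - 2)))`, which is `1 / α` for the right `σ`.

**Regret.** The posterior of the latent state is a function of the actions alone
(`ActionAutomaton.IsFilter`), so that an episode is a Markov-type product and likelihood ratios
against the null instance `ε = 0` are explicit products. A reveal costs `1 / 2` on the null
instance; on the lock with key `θ` and secret `v` every episode without the right location and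
password costs `ε`. To distinguish this lock, with `v` uniformly random, from the null one takes
either about `1 / ε²` episodes with the right password, or about `√n / (ε σ)²` reveals at the
right location; the factor `√n` appears because the signals of two random sign vectors are nearly
uncorrelated (`sum_sum_signalCrossBound_pow_mul_le`). This is a χ² bound for the mixture over `v`
of the likelihood ratios, stopped when one of the two budgets is exhausted
(`CrossMomentBound.sub_le_mixtureMisses`). One episode tests one password, and one reveal tests
one of about `S H A` locations, so averaging over `θ` (`le_null_or_exists_alternative_le`) shows
that either the null instance suffers regret of order `S H A √n / (ε σ)²`, or some `(θ, v)`
suffers regret of order `ε T`, as long as `ε² T` is at most a small multiple of the number of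
keys, which exceeds a multiple of `S H A ^ (H / 2)`. The largest `ε` allowed by these constraints
gives the three terms of the minimum, even without the factor `1 / m`.
-/

open Finset

noncomputable section

/-- A finite episodic POMDP with horizon `H`, latent state space `S`, observation space `O`,
action space `A`.  Steps are indexed by `1, …, H` (paper convention). -/
structure POMDP (S O A : Type) [Fintype S] [Fintype O] [Fintype A] (H : ℕ) where
  init : S → ℝ
  init_nonneg : ∀ s, 0 ≤ init s
  init_sum : ∑ s, init s = 1
  trans : ℕ → S → A → S → ℝ
  trans_nonneg : ∀ h s a s', 0 ≤ trans h s a s'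
  trans_sum : ∀ h s a, ∑ s', trans h s a s' = 1
  emit : ℕ → S → O → ℝ
  emit_nonneg : ∀ h s o, 0 ≤ emit h s o
  emit_sum : ∀ h s, ∑ o, emit h s o = 1
  reward : ℕ → O → A → ℝ
  reward_nonneg : ∀ h o a, 0 ≤ reward h o a
  reward_le_one : ∀ h o a, reward h o a ≤ 1
  reward_total : ∀ τ : Fin H → O × A, ∑ h : Fin H, reward (h.1 + 1) (τ h).1 (τ h).2 ≤ 1

namespace POMDP

variable {S O A : Type} [Fintype S] [Fintype O] [Fintype A] {H : ℕ}

/-- `emitActProb M m h s ω a` is the probability `ℙ_M(o_{h:h+m−1} = ω | s_h = s,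
a_{h:h+m−2} = a)` of observing the sequence `ω ∈ 𝒪^m` when the latent state at (1-based)
step `h` is `s` and the action sequence `a ∈ 𝒜^{m−1}` is executed. -/
def emitActProb (M : POMDP S O A H) : (m : ℕ) → ℕ → S → (Fin m → O) → (Fin (m - 1) → A) → ℝ
  | 0, _, _, _, _ => 1
  | 1, h, s, ω, _ => M.emit h s (ω 0)
  | m + 2, h, s, ω, a =>
    M.emit h s (ω 0) *
      ∑ s' : S, M.trans h s (a ⟨0, Nat.succ_pos m⟩) s' *
        emitActProb M (m + 1) (h + 1) s' (fun i => ω i.succ) (fun i => a i.succ)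

/-- The `m`-step emission–action matrix `𝕄_{h,m}` (`h` is the 1-based step index). -/
def emitActMatrix (M : POMDP S O A H) (h m : ℕ) :
    Matrix ((Fin m → O) × (Fin (m - 1) → A)) S ℝ :=
  Matrix.of fun p s => M.emitActProb m h s p.1 p.2

/-- The set of columns of the step-(h−1) transition matrix `𝕋_{h−1}`
(the single column `μ₁` when `h = 1`). -/
def stepCols (M : POMDP S O A H) (h : ℕ) : Set (S → ℝ) :=
  if h = 1 then {fun s => M.init s}
  else {c | ∃ s' a', c = fun s => M.trans (h - 1) s' a' s}

/-- `B` is a generalized left inverse of `𝕄_{h,m}`, i.e. `B · 𝕄_{h,m} · 𝕋_{h−1} = 𝕋_{h−1}`. -/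
def IsGenLeftInv (M : POMDP S O A H) (h m : ℕ)
    (B : Matrix S ((Fin m → O) × (Fin (m - 1) → A)) ℝ) : Prop :=
  ∀ c ∈ M.stepCols h, (B * M.emitActMatrix h m).mulVec c = c

end POMDP

/-- The star-norm `‖x‖_* = (Σ_a (Σ_ω |x(ω,a)|)²)^{1/2}`. -/
def starNorm {ι κ : Type} [Fintype ι] [Fintype κ] (x : ι × κ → ℝ) : ℝ :=
  Real.sqrt (∑ a : κ, (∑ ω : ι, |x (ω, a)|) ^ 2)

/-- The `(*→1)`-operator norm `‖B‖_{*→1} = max_{‖x‖_* ≤ 1} ‖Bx‖₁`. -/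
def opNormStarOne {S ι κ : Type} [Fintype S] [Fintype ι] [Fintype κ]
    (B : Matrix S (ι × κ) ℝ) : ℝ :=
  sSup {y | ∃ x : ι × κ → ℝ, starNorm x ≤ 1 ∧ y = ∑ s, |B.mulVec x s|}

/-- The `(1→1)`-operator norm `‖B‖_{1→1} = max_{‖y‖₁ ≤ 1} ‖By‖₁`. -/
def opNormOneOne {ι₁ ι₂ : Type} [Fintype ι₁] [Fintype ι₂] (B : Matrix ι₁ ι₂ ℝ) : ℝ :=
  sSup {y | ∃ v : ι₂ → ℝ, (∑ i, |v i|) ≤ 1 ∧ y = ∑ j, |B.mulVec v j|}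

namespace POMDP
variable {S O A : Type} [Fintype S] [Fintype O] [Fintype A] {H : ℕ}

/-- `M` is `m`-step `α`-revealing. -/
def IsRevealing (M : POMDP S O A H) (m : ℕ) (α : ℝ) : Prop :=
  ∀ h ∈ Finset.Icc 1 (H - m + 1),
    ∃ B : Matrix S ((Fin m → O) × (Fin (m - 1) → A)) ℝ,
      M.IsGenLeftInv h m B ∧ opNormStarOne B ≤ 1 / α

end POMDP

/-- A history-dependent policy: a distribution over actions for every (history, observation). -/
structure Policy (O A : Type) [Fintype A] where
  act : List (O × A) → O → A → ℝ
  act_nonneg : ∀ τ o a, 0 ≤ act τ o a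
  act_sum : ∀ τ o, ∑ a, act τ o a = 1

namespace POMDP
variable {S O A : Type} [Fintype S] [Fintype O] [Fintype A] {H : ℕ}

/-- The probability `ℙ_M^π(τ)` of a full trajectory `τ = (o_1,a_1,…,o_H,a_H)`. -/
def trajProb (M : POMDP S O A H) (π : Policy O A) (τ : Fin H → O × A) : ℝ :=
  ∑ s : Fin H → S, ∏ h : Fin H,
    (if h.1 = 0 then M.init (s h)
     else
       M.trans h.1 (s ⟨h.1 - 1, Nat.lt_of_le_of_lt (Nat.sub_le _ _) h.2⟩)
         (τ ⟨h.1 - 1, Nat.lt_of_le_of_lt (Nat.sub_le _ _) h.2⟩).2 (s h)) *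
    M.emit (h.1 + 1) (s h) (τ h).1 *
    π.act ((List.ofFn τ).take h.1) (τ h).1 (τ h).2

/-- The value `V_M(π)` of a policy. -/
def value (M : POMDP S O A H) (π : Policy O A) : ℝ :=
  ∑ τ : Fin H → O × A, M.trajProb π τ * ∑ h : Fin H, M.reward (h.1 + 1) (τ h).1 (τ h).2

/-- The optimal value `V_M⋆`. -/
def optValue (M : POMDP S O A H) : ℝ := ⨆ π : Policy O A, M.value π

end POMDP

/-- A `T`-episode algorithm: a distribution over actions for every
(past episodes, within-episode history, current observation), and an output policy map. -/
structure Algorithm (O A : Type) [Fintype A] (H : ℕ) where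
  act : List (Fin H → O × A) → List (O × A) → O → A → ℝ
  act_nonneg : ∀ past hist o a, 0 ≤ act past hist o a
  act_sum : ∀ past hist o, ∑ a, act past hist o a = 1
  out : List (Fin H → O × A) → Policy O A

/-- The policy executed by algorithm `𝔄` in the episode following the past episodes `past`. -/
def Algorithm.policyAt {O A : Type} [Fintype A] {H : ℕ} (𝔄 : Algorithm O A H)
    (past : List (Fin H → O × A)) : Policy O A :=
  ⟨fun hist o a => 𝔄.act past hist o a, fun _ _ _ => 𝔄.act_nonneg _ _ _ _,
    fun _ _ => 𝔄.act_sum _ _ _⟩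

namespace POMDP
variable {S O A : Type} [Fintype S] [Fintype O] [Fintype A] {H : ℕ}

/-- The law `ℙ_M^𝔄` of the transcript `(τ^{(1)},…,τ^{(T)})`. -/
def transcriptProb (M : POMDP S O A H) (𝔄 : Algorithm O A H) {T : ℕ}
    (τs : Fin T → Fin H → O × A) : ℝ :=
  ∏ t : Fin T, M.trajProb (𝔄.policyAt ((List.ofFn τs).take t.1)) (τs t)

open Classical in
/-- `ℙ_M^𝔄(V_M⋆ − V_M(π^out) < ε)`. -/
def pacProb (M : POMDP S O A H) (𝔄 : Algorithm O A H) (T : ℕ) (ε : ℝ) : ℝ :=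
  ∑ τs : Fin T → Fin H → O × A,
    if M.optValue - M.value (𝔄.out (List.ofFn τs)) < ε then M.transcriptProb 𝔄 τs else 0

/-- The expected regret `E_M^𝔄[Σ_{t=1}^T (V_M⋆ − V_M(π^{(t)}))]`. -/
def expRegret (M : POMDP S O A H) (𝔄 : Algorithm O A H) (T : ℕ) : ℝ :=
  ∑ τs : Fin T → Fin H → O × A,
    M.transcriptProb 𝔄 τs *
      ∑ t : Fin T, (M.optValue - M.value (𝔄.policyAt ((List.ofFn τs).take t.1)))

end POMDP

/-! ### Laws of adaptively generated sequences -/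

section Sequences

variable {X M : Type*}

/-- The product over a sequence of factors `K p x` that see an entry `x` and the list `p` of entries
before it. Laws of sequences and their likelihood ratios are products of this form; the additive
version `seqSum` is used for costs and counts. -/
@[to_additive]
def seqProd [CommMonoid M] (K : List X → X → M) (l : List X) : M :=
  l.reverseRecOn 1 fun p x P => P * K p x

@[to_additive]
lemma seqProd_nil [CommMonoid M] (K : List X → X → M) : seqProd K [] = 1 := by
  simp [seqProd]

attribute [simp] seqProd_nil seqSum_nil

@[to_additive]
lemma seqProd_concat [CommMonoid M] (K : List X → X → M) (l : List X) (x : X) :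
    seqProd K (l ++ [x]) = seqProd K l * K l x :=
  List.reverseRecOn_concat x l 1 fun p y P => P * K p y

lemma seqProd_mul [CommMonoid M] (K K' : List X → X → M) (l : List X) :
    seqProd (fun p x => K p x * K' p x) l = seqProd K l * seqProd K' l := by
  induction l using List.reverseRecOn with
  | nil => simp
  | append_singleton l x ih => simp only [seqProd_concat, ih, mul_mul_mul_comm]

lemma seqProd_inv [DivisionCommMonoid M] (K : List X → X → M) (l : List X) :
    seqProd (fun p x => (K p x)⁻¹) l = (seqProd K l)⁻¹ := by
  induction l using List.reverseRecOn with
  | nil => simp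
  | append_singleton l x ih => simp only [seqProd_concat, ih, mul_inv]

lemma seqProd_nonneg {K : List X → X → ℝ} (hK : ∀ p x, 0 ≤ K p x) (l : List X) :
    0 ≤ seqProd K l := by
  induction l using List.reverseRecOn with
  | nil => simp
  | append_singleton l x ih => rw [seqProd_concat]; exact mul_nonneg ih (hK _ _)

lemma ofFn_eq_castSucc_concat {n : ℕ} (τ : Fin (n + 1) → X) :
    List.ofFn τ = List.ofFn (fun i : Fin n => τ i.castSucc) ++ [τ (Fin.last n)] := by
  rw [List.ofFn_succ', List.concat_eq_append]

@[to_additive]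
lemma prod_take_eq_seqProd [CommMonoid M] (K : List X → X → M) {n : ℕ} (τ : Fin n → X) :
    ∏ h : Fin n, K ((List.ofFn τ).take h.1) (τ h) = seqProd K (List.ofFn τ) := by
  induction n with
  | zero => simp
  | succ n ih =>
    rw [Fin.prod_univ_castSucc, ofFn_eq_castSucc_concat, seqProd_concat, ← ih]
    congr 1
    · refine Finset.prod_congr rfl fun h _ => ?_
      rw [List.take_append_of_le_length (by simp), Fin.val_castSucc]
    · simp

variable [Fintype X]

/-- The expectation of `f` over the sequences of length `n` whose entries are drawn successively
from the kernel `K`, given the entries before. The same notion serves for the steps of an episode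
and for the episodes of a transcript, and `K` may be unnormalised. -/
def seqExpect (K : List X → X → ℝ) (n : ℕ) (f : List X → ℝ) : ℝ :=
  ∑ τ : Fin n → X, seqProd K (List.ofFn τ) * f (List.ofFn τ)

@[simp] lemma seqExpect_zero (K : List X → X → ℝ) (f : List X → ℝ) : seqExpect K 0 f = f [] := by
  simp [seqExpect]

lemma seqExpect_succ (K : List X → X → ℝ) (n : ℕ) (f : List X → ℝ) :
    seqExpect K (n + 1) f = seqExpect K n fun l => ∑ x, K l x * f (l ++ [x]) := by
  unfold seqExpect
  rw [← (Fin.snocEquiv fun _ : Fin (n + 1) => X).sum_comp, Fintype.sum_prod_type_right]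
  refine Finset.sum_congr rfl fun τ _ => ?_
  rw [Finset.mul_sum]
  refine Finset.sum_congr rfl fun x _ => ?_
  rw [ofFn_eq_castSucc_concat]
  simp [Fin.snocEquiv, seqProd_concat, mul_assoc]

lemma seqExpect_congr {K : List X → X → ℝ} {n : ℕ} {f g : List X → ℝ}
    (h : ∀ l, l.length = n → f l = g l) : seqExpect K n f = seqExpect K n g :=
  Finset.sum_congr rfl fun τ _ => by rw [h _ (by simp)]

lemma seqExpect_mono {K : List X → X → ℝ} (hK : ∀ p x, 0 ≤ K p x) {n : ℕ} {f g : List X → ℝ}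
    (h : ∀ l, l.length = n → f l ≤ g l) : seqExpect K n f ≤ seqExpect K n g :=
  Finset.sum_le_sum fun τ _ =>
    mul_le_mul_of_nonneg_left (h _ (by simp)) (seqProd_nonneg hK _)

lemma seqExpect_add (K : List X → X → ℝ) (n : ℕ) (f g : List X → ℝ) :
    seqExpect K n (fun l => f l + g l) = seqExpect K n f + seqExpect K n g := by
  simp only [seqExpect, mul_add, Finset.sum_add_distrib]

lemma seqExpect_sub (K : List X → X → ℝ) (n : ℕ) (f g : List X → ℝ) :
    seqExpect K n (fun l => f l - g l) = seqExpect K n f - seqExpect K n g := by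
  simp only [seqExpect, mul_sub, Finset.sum_sub_distrib]

lemma seqExpect_const_mul (K : List X → X → ℝ) (n : ℕ) (c : ℝ) (f : List X → ℝ) :
    seqExpect K n (fun l => c * f l) = c * seqExpect K n f := by
  simp only [seqExpect, Finset.mul_sum, mul_left_comm]

lemma seqExpect_sum {ι : Type*} (s : Finset ι) (K : List X → X → ℝ) (n : ℕ)
    (f : ι → List X → ℝ) :
    seqExpect K n (fun l => ∑ i ∈ s, f i l) = ∑ i ∈ s, seqExpect K n (f i) := by
  simp only [seqExpect, Finset.mul_sum]
  rw [Finset.sum_comm]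

lemma seqExpect_one {K : List X → X → ℝ} (hK : ∀ p, ∑ x, K p x = 1) (n : ℕ) :
    seqExpect K n (fun _ => 1) = 1 := by
  induction n with
  | zero => simp
  | succ n ih => rw [seqExpect_succ]; simpa [hK] using ih

lemma seqExpect_const {K : List X → X → ℝ} (hK : ∀ p, ∑ x, K p x = 1) (n : ℕ) (c : ℝ) :
    seqExpect K n (fun _ => c) = c := by
  simpa [seqExpect_one hK] using seqExpect_const_mul K n c fun _ => 1

lemma seqExpect_mul_kernel (K R : List X → X → ℝ) (n : ℕ) (f : List X → ℝ) :
    seqExpect (fun p x => K p x * R p x) n f = seqExpect K n fun l => seqProd R l * f l := by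
  simp only [seqExpect, seqProd_mul, mul_assoc]

lemma seqExpect_seqProd_eq_one {K Y : List X → X → ℝ} (h : ∀ p, ∑ x, K p x * Y p x = 1)
    (n : ℕ) : seqExpect K n (seqProd Y) = 1 := by
  simpa [seqExpect_one h] using (seqExpect_mul_kernel K Y n fun _ => 1).symm

lemma seqExpect_seqProd_le_one {K Y : List X → X → ℝ} (hK : ∀ p x, 0 ≤ K p x)
    (hY : ∀ p x, 0 ≤ Y p x) (h : ∀ p, ∑ x, K p x * Y p x ≤ 1) (n : ℕ) :
    seqExpect K n (seqProd Y) ≤ 1 := by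
  induction n with
  | zero => simp
  | succ n ih =>
    rw [seqExpect_succ]
    refine (seqExpect_mono hK fun l _ => ?_).trans ih
    calc ∑ x, K l x * seqProd Y (l ++ [x]) = seqProd Y l * ∑ x, K l x * Y l x := by
          simp only [seqProd_concat, mul_left_comm, Finset.mul_sum]
      _ ≤ seqProd Y l := mul_le_of_le_one_right (seqProd_nonneg hY l) (h l)

/-- The kernel `K` draws every entry of a sequence from a probability distribution. -/
structure IsProbKernel (K : List X → X → ℝ) : Prop where
  nonneg : ∀ p x, 0 ≤ K p x
  sum_eq_one : ∀ p, ∑ x, K p x = 1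

lemma seqExpect_seqSum_succ {K : List X → X → ℝ} (hK : ∀ p, ∑ x, K p x = 1)
    (g : List X → X → ℝ) (n : ℕ) :
    seqExpect K (n + 1) (seqSum g) =
      seqExpect K n (seqSum g) + seqExpect K n fun l => ∑ x, K l x * g l x := by
  simp only [seqExpect_succ, ← seqExpect_add, seqSum_concat, mul_add, Finset.sum_add_distrib,
    ← Finset.sum_mul, hK, one_mul]

lemma IsProbKernel.seqExpect_seqSum_le {K g g' : List X → X → ℝ} (hK : IsProbKernel K)
    (h : ∀ p, ∑ x, K p x * g p x ≤ ∑ x, K p x * g' p x) (n : ℕ) :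
    seqExpect K n (seqSum g) ≤ seqExpect K n (seqSum g') := by
  induction n with
  | zero => simp
  | succ n ih =>
    rw [seqExpect_seqSum_succ hK.sum_eq_one, seqExpect_seqSum_succ hK.sum_eq_one]
    exact add_le_add ih (seqExpect_mono hK.nonneg fun l _ => h l)

end Sequences

/-! ### Latent posteriors driven by the actions -/

section Filtering

variable {S O A U : Type*}

/-- A deterministic automaton with states `U` that reads the actions of an episode, together with a
law of the observation at every step and state. It describes a POMDP in which the posterior of the
latent state depends on the past actions only. As for a `POMDP`, the first step is `1`. -/
structure ActionAutomaton (U O A : Type*) where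
  start : U
  step : ℕ → U → A → U
  obsLaw : ℕ → U → O → ℝ

namespace ActionAutomaton

variable (F : ActionAutomaton U O A)

/-- The state of the automaton after a history. -/
def run (l : List (O × A)) : U :=
  l.reverseRecOn F.start fun p x u => F.step (p.length + 1) u x.2

@[simp] lemma run_nil : F.run [] = F.start := by simp [run]

lemma run_concat (l : List (O × A)) (x : O × A) :
    F.run (l ++ [x]) = F.step (l.length + 1) (F.run l) x.2 := by
  simp [run]

lemma run_take_succ {n : ℕ} (τ : Fin n → O × A) (i : Fin n) :
    F.run ((List.ofFn τ).take (i + 1)) =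
      F.step (i + 1) (F.run ((List.ofFn τ).take i)) (τ i).2 := by
  rw [List.take_succ_eq_append_getElem (by simp), run_concat]
  simp

/-- The state of the automaton after `n` steps of the action sequence `a` (whose first action is
`a 1`). -/
def stateAfter (a : ℕ → A) : ℕ → U
  | 0 => F.start
  | n + 1 => F.step (n + 1) (stateAfter a n) (a (n + 1))

end ActionAutomaton

/-- The policy that plays the action `a h` at step `h` whatever the history. -/
def openLoop {O A : Type} [Fintype A] [DecidableEq A] (a : ℕ → A) : Policy O A where
  act l _ b := if b = a (l.length + 1) then 1 else 0
  act_nonneg _ _ _ := by split_ifs <;> norm_num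
  act_sum _ _ := by simp

namespace ActionAutomaton

variable {S O A : Type} [Fintype S] [Fintype O] [Fintype A] {N : ℕ} (F : ActionAutomaton U O A)

/-- The law of the next observation-action pair given the history, under the policy `π`. -/
def kernel (π : Policy O A) (l : List (O × A)) (x : O × A) : ℝ :=
  F.obsLaw (l.length + 1) (F.run l) x.1 * π.act l x.1 x.2

/-- The automaton filters `M`: after a history of positive probability that leads to the automaton
state `u`, the posterior law of the latent state (before the observation of the current step) is
`posterior u`. -/
structure IsFilter (M : POMDP S O A (N + 1)) (posterior : U → S → ℝ) : Prop where
  init : ∀ s, M.init s = posterior F.start s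
  step : ∀ h, 1 ≤ h → h ≤ N → ∀ u o a s',
    ∑ s, posterior u s * M.emit h s o * M.trans h s a s' =
      F.obsLaw h u o * posterior (F.step h u a) s'
  last : ∀ u o, ∑ s, posterior u s * M.emit (N + 1) s o = F.obsLaw (N + 1) u o

end ActionAutomaton

lemma sum_path_prod_eq [Fintype S] {n : ℕ} (b : Fin (n + 1) → S → ℝ) (w : Fin n → S → S → ℝ)
    (c : Fin n → ℝ) (φ : S → ℝ)
    (h : ∀ i s', ∑ s, b i.castSucc s * w i s s' = c i * b i.succ s') :
    ∑ s : Fin (n + 1) → S,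
        b 0 (s 0) * (∏ i : Fin n, w i (s i.castSucc) (s i.succ)) * φ (s (Fin.last n)) =
      (∏ i, c i) * ∑ s, b (Fin.last n) s * φ s := by
  induction n with
  | zero =>
    rw [← (Equiv.funUnique (Fin 1) S).symm.sum_comp]
    simp [Equiv.funUnique]
  | succ n ih =>
    have hpeel (s : Fin (n + 1) → S) :
        ∑ x, b 0 x * w 0 x (s 0) = c 0 * b 1 (s 0) := h 0 (s 0)
    have htail := ih (fun i => b i.succ) (fun i => w i.succ) (fun i => c i.succ)
      (fun i => h i.succ)
    rw [← (Fin.consEquiv fun _ : Fin (n + 2) => S).sum_comp, Fintype.sum_prod_type_right,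
      Fin.prod_univ_succ, mul_assoc]
    rw [Fin.succ_last] at htail
    rw [← htail, Finset.mul_sum]
    refine Finset.sum_congr rfl fun s _ => ?_
    calc _ = (∑ x, b 0 x * w 0 x (s 0)) *
          ((∏ i : Fin n, w i.succ (s i.castSucc) (s i.succ)) * φ (s (Fin.last n))) := by
          rw [Finset.sum_mul]
          refine Finset.sum_congr rfl fun x _ => ?_
          simp only [Fin.consEquiv_apply, Fin.prod_univ_succ, ← Fin.succ_last, Fin.cons_zero,
            Fin.cons_succ, Fin.castSucc_zero, ← Fin.succ_castSucc]
          ring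
      _ = _ := by
          rw [hpeel]
          simp only [Fin.succ_zero_eq_one]
          ring

namespace ActionAutomaton

variable {S O A : Type} [Fintype S] [Fintype O] [Fintype A] {N : ℕ} {F : ActionAutomaton U O A}

lemma prod_latent_factors {M : POMDP S O A (N + 1)} (τ : Fin (N + 1) → O × A)
    (s : Fin (N + 1) → S) :
    (∏ h : Fin (N + 1),
        (if h.1 = 0 then M.init (s h)
          else M.trans h.1 (s ⟨h.1 - 1, Nat.lt_of_le_of_lt (Nat.sub_le _ _) h.2⟩)
            (τ ⟨h.1 - 1, Nat.lt_of_le_of_lt (Nat.sub_le _ _) h.2⟩).2 (s h)) *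
        M.emit (h.1 + 1) (s h) (τ h).1) =
      M.init (s 0) *
        (∏ i : Fin N, M.emit (i + 1) (s i.castSucc) (τ i.castSucc).1 *
          M.trans (i + 1) (s i.castSucc) (τ i.castSucc).2 (s i.succ)) *
        M.emit (N + 1) (s (Fin.last N)) (τ (Fin.last N)).1 := by
  rw [Finset.prod_mul_distrib, Fin.prod_univ_succ,
    Fin.prod_univ_castSucc (n := N) fun h => M.emit (h.1 + 1) (s h) (τ h).1,
    Finset.prod_mul_distrib]
  simp only [Fin.val_zero, if_true, Fin.val_succ, Nat.succ_ne_zero, if_false, Fin.val_castSucc,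
    Fin.val_last, Nat.add_sub_cancel]
  change _ * (∏ i : Fin N, M.trans (i + 1) (s i.castSucc) (τ i.castSucc).2 (s i.succ)) * _ = _
  ring

theorem IsFilter.trajProb_eq_seqProd {M : POMDP S O A (N + 1)} {posterior : U → S → ℝ}
    (hF : F.IsFilter M posterior) (π : Policy O A) (τ : Fin (N + 1) → O × A) :
    M.trajProb π τ = seqProd (F.kernel π) (List.ofFn τ) := by
  let u (i : ℕ) : U := F.run ((List.ofFn τ).take i)
  have hpath := sum_path_prod_eq (fun i : Fin (N + 1) => posterior (u i))
    (fun i : Fin N => fun s s' =>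
      M.emit (i + 1) s (τ i.castSucc).1 * M.trans (i + 1) s (τ i.castSucc).2 s')
    (fun i => F.obsLaw (i + 1) (u i) (τ i.castSucc).1)
    (fun s => M.emit (N + 1) s (τ (Fin.last N)).1) fun i s' => by
      have hu : u (i + 1) = F.step (i + 1) (u i) (τ i.castSucc).2 := F.run_take_succ τ i.castSucc
      simpa only [← mul_assoc, Fin.val_castSucc, Fin.val_succ, hu] using
        hF.step (i + 1) (by omega) (by omega) (u i) (τ i.castSucc).1 (τ i.castSucc).2 s'
  have hinit (s : S) : M.init s = posterior (u 0) s := by simp [u, hF.init]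
  have hkernel (h : Fin (N + 1)) : F.kernel π ((List.ofFn τ).take h) (τ h) =
      F.obsLaw (h + 1) (u h) (τ h).1 * π.act ((List.ofFn τ).take h) (τ h).1 (τ h).2 := by
    simp [ActionAutomaton.kernel, u]
  unfold POMDP.trajProb
  simp only [Finset.prod_mul_distrib (g := fun h : Fin (N + 1) =>
    π.act ((List.ofFn τ).take h.1) (τ h).1 (τ h).2), prod_latent_factors, ← Finset.sum_mul,
    ← prod_take_eq_seqProd, hkernel]
  congr 1
  rw [Fin.prod_univ_castSucc]
  simp only [hinit]
  exact hpath.trans (by rw [hF.last]; rfl)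

theorem IsFilter.sum_trajProb_mul {M : POMDP S O A (N + 1)} {posterior : U → S → ℝ}
    (hF : F.IsFilter M posterior) (π : Policy O A) (f : List (O × A) → ℝ) :
    ∑ τ, M.trajProb π τ * f (List.ofFn τ) = seqExpect (F.kernel π) (N + 1) f := by
  simp only [seqExpect, hF.trajProb_eq_seqProd]

lemma sum_kernel_mul (F : ActionAutomaton U O A) (π : Policy O A) (l : List (O × A))
    (g : O → ℝ) :
    ∑ x, F.kernel π l x * g x.1 = ∑ o, F.obsLaw (l.length + 1) (F.run l) o * g o := by
  rw [Fintype.sum_prod_type]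
  simp only [kernel, mul_right_comm _ (π.act _ _ _), ← Finset.mul_sum, π.act_sum, mul_one]

lemma seqExpect_openLoop [DecidableEq A] (hF : ∀ h u, ∑ o, F.obsLaw h u o = 1) (a : ℕ → A)
    (n : ℕ) (G : U → ℝ) :
    seqExpect (F.kernel (openLoop a)) n (fun l => G (F.run l)) = G (F.stateAfter a n) := by
  induction n generalizing G with
  | zero => simp [stateAfter]
  | succ n ih =>
    rw [seqExpect_succ, stateAfter, ← ih fun u => G (F.step (n + 1) u (a (n + 1)))]
    refine seqExpect_congr fun l hl => ?_
    simp [run_concat, Fintype.sum_prod_type, kernel, openLoop, hl, ← Finset.sum_mul, hF]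

end ActionAutomaton

end Filtering

/-! ### Stopped likelihood ratios -/

section StoppedLikelihoodRatios

variable {X : Type*}

open Classical in
/-- The factor `y` as long as the history satisfies `active`, and `1` afterwards. The product of
these factors is the likelihood ratio with entries `y`, stopped when `active` first fails. -/
def stoppedFactor (active : List X → Prop) (y : X → ℝ) (p : List X) (x : X) : ℝ :=
  if active p then y x else 1

lemma stoppedFactor_nonneg (active : List X → Prop) {y : X → ℝ} (hy : ∀ x, 0 ≤ y x)
    (p : List X) (x : X) : 0 ≤ stoppedFactor active y p x := by
  unfold stoppedFactor
  split_ifs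
  exacts [hy x, zero_le_one]

lemma sum_mul_stoppedFactor [Fintype X] (K : List X → X → ℝ) (active : List X → Prop)
    (y : X → ℝ) (p : List X) [Decidable (active p)] :
    ∑ x, K p x * stoppedFactor active y p x =
      if active p then ∑ x, K p x * y x else ∑ x, K p x := by
  unfold stoppedFactor
  split_ifs <;> simp

lemma seqProd_stoppedFactor_of_active {active : List X → Prop}
    (hprefix : ∀ l x, active (l ++ [x]) → active l) (y : X → ℝ) {l : List X} (hl : active l) :
    seqProd (stoppedFactor active y) l = seqProd (fun _ x => y x) l := by
  induction l using List.reverseRecOn with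
  | nil => simp
  | append_singleton l x ih =>
    have hl' := hprefix l x hl
    rw [seqProd_concat, seqProd_concat, ih hl', stoppedFactor, if_pos hl']

/-- Fewer than `n₁` entries are flagged by `R` and fewer than `n₂` by `F`. -/
def WithinBudget (R F : X → Bool) (n₁ n₂ : ℕ) (l : List X) : Prop :=
  l.countP R < n₁ ∧ l.countP F < n₂

instance (R F : X → Bool) (n₁ n₂ : ℕ) : DecidablePred (WithinBudget R F n₁ n₂) :=
  fun _ => inferInstanceAs (Decidable (_ ∧ _))

lemma WithinBudget.of_concat {R F : X → Bool} {n₁ n₂ : ℕ} (l : List X) (x : X)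
    (h : WithinBudget R F n₁ n₂ (l ++ [x])) : WithinBudget R F n₁ n₂ l := by
  simp only [WithinBudget, List.countP_append] at h ⊢
  omega

/-- The weight `g` for the flag `R` times the weight `d` for the flag `F`. -/
def flagWeight (R F : X → Bool) (g d : ℝ) (x : X) : ℝ :=
  (if R x then g else 1) * if F x then d else 1

lemma flagWeight_pos (R F : X → Bool) {g d : ℝ} (hg : 0 < g) (hd : 0 < d) (x : X) :
    0 < flagWeight R F g d x := by
  unfold flagWeight
  split_ifs <;> positivity

lemma flagWeight_eq_pow_mul_pow (R F : X → Bool) (g d : ℝ) (x : X) :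
    flagWeight R F g d x = g ^ [x].countP R * d ^ [x].countP F := by
  simp [flagWeight, List.countP_singleton]

lemma seqProd_stopped_flagWeight_le (R F : X → Bool) (n₁ n₂ : ℕ) {g d : ℝ} (hg : 1 ≤ g)
    (hd : 1 ≤ d) (l : List X) :
    seqProd (stoppedFactor (WithinBudget R F n₁ n₂) (flagWeight R F g d)) l ≤
      g ^ n₁ * d ^ n₂ := by
  suffices h : seqProd (stoppedFactor (WithinBudget R F n₁ n₂) (flagWeight R F g d)) l ≤
      g ^ min (l.countP R) n₁ * d ^ min (l.countP F) n₂ by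
    refine h.trans ?_
    gcongr <;> simp
  induction l using List.reverseRecOn with
  | nil => simp
  | append_singleton l x ih =>
    rw [seqProd_concat, stoppedFactor]
    split_ifs with hl
    · have hR : min ((l ++ [x]).countP R) n₁ = min (l.countP R) n₁ + [x].countP R := by
        rw [List.countP_append, min_eq_left (by grind [WithinBudget]), min_eq_left hl.1.le]
      have hF : min ((l ++ [x]).countP F) n₂ = min (l.countP F) n₂ + [x].countP F := by
        rw [List.countP_append, min_eq_left (by grind [WithinBudget]), min_eq_left hl.2.le]
      rw [hR, hF, pow_add, pow_add, flagWeight_eq_pow_mul_pow, mul_mul_mul_comm]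
      gcongr
    · rw [mul_one]
      refine ih.trans ?_
      gcongr <;> simp

lemma sum_countP_le {Θ : Type*} [Fintype Θ] {R : Θ → X → Bool} {rev : X → Bool} {c : ℝ}
    (h : ∀ x, (#{θ | R θ x} : ℝ) ≤ if rev x then c else 0) (l : List X) :
    ∑ θ, (l.countP (R θ) : ℝ) ≤ c * l.countP rev := by
  induction l using List.reverseRecOn with
  | nil => simp
  | append_singleton l x ih =>
    have hx := h x
    rw [Finset.card_filter] at hx
    push_cast [List.countP_append, List.countP_singleton] at hx ⊢
    rw [Finset.sum_add_distrib, mul_add, mul_ite, mul_one, mul_zero]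
    exact add_le_add ih hx

variable [Fintype X] {V : Type*} [Fintype V]

lemma seqExpect_stoppedFactor_eq_one {K : List X → X → ℝ} (hK : ∀ p, ∑ x, K p x = 1)
    (active : List X → Prop) {y : X → ℝ} (hy : ∀ p, ∑ x, K p x * y x = 1) (n : ℕ) :
    seqExpect K n (seqProd (stoppedFactor active y)) = 1 := by
  classical
  refine seqExpect_seqProd_eq_one (fun p => ?_) n
  rw [sum_mul_stoppedFactor, hK, hy, ite_self]

/-- The product of two likelihood ratios, divided by the flag weights, is a supermartingale. -/
lemma IsProbKernel.seqExpect_stopped_mul_stopped_le {K : List X → X → ℝ} (hK : IsProbKernel K)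
    {y y' : X → ℝ} (hy : ∀ x, 0 ≤ y x) (hy' : ∀ x, 0 ≤ y' x) {R F : X → Bool} {g d : ℝ}
    (hg : 1 ≤ g) (hd : 1 ≤ d)
    (hcross : ∀ p, ∑ x, K p x * (y x * y' x / flagWeight R F g d x) ≤ 1) (n₁ n₂ n : ℕ) :
    seqExpect K n (fun l => seqProd (stoppedFactor (WithinBudget R F n₁ n₂) y) l *
      seqProd (stoppedFactor (WithinBudget R F n₁ n₂) y') l) ≤ g ^ n₁ * d ^ n₂ := by
  classical
  let W := stoppedFactor (WithinBudget R F n₁ n₂) fun x => y x * y' x / flagWeight R F g d x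
  have hweight (x : X) : 0 < flagWeight R F g d x :=
    flagWeight_pos R F (one_pos.trans_le hg) (one_pos.trans_le hd) x
  have hW (p : List X) (x : X) : 0 ≤ W p x :=
    stoppedFactor_nonneg _ (fun x => div_nonneg (mul_nonneg (hy x) (hy' x)) (hweight x).le) p x
  have hsplit (l : List X) : seqProd (stoppedFactor (WithinBudget R F n₁ n₂) y) l *
      seqProd (stoppedFactor (WithinBudget R F n₁ n₂) y') l =
      seqProd (stoppedFactor (WithinBudget R F n₁ n₂) (flagWeight R F g d)) l * seqProd W l := by
    simp only [W, ← seqProd_mul]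
    congr 1
    funext p x
    simp only [stoppedFactor]
    split_ifs
    · exact (mul_div_cancel₀ _ (hweight x).ne').symm
    · rfl
  calc _ ≤ seqExpect K n (fun l => (g ^ n₁ * d ^ n₂) * seqProd W l) := by
        refine seqExpect_mono hK.nonneg fun l _ => ?_
        rw [hsplit]
        exact mul_le_mul_of_nonneg_right (seqProd_stopped_flagWeight_le R F n₁ n₂ hg hd l)
          (seqProd_nonneg hW l)
    _ = (g ^ n₁ * d ^ n₂) * seqExpect K n (seqProd W) := seqExpect_const_mul _ _ _ _
    _ ≤ g ^ n₁ * d ^ n₂ := by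
        refine mul_le_of_le_one_right (by positivity) ?_
        refine seqExpect_seqProd_le_one hK.nonneg hW (fun p => ?_) n
        rw [sum_mul_stoppedFactor]
        split_ifs
        exacts [hcross p, (hK.sum_eq_one p).le]

lemma seqExpect_one_sub_average_sq_le [Nonempty V] {K : List X → X → ℝ}
    (hK : ∀ p, ∑ x, K p x = 1) {Y : V → List X → ℝ} {n : ℕ} {δ : ℝ}
    (hY : ∀ v, seqExpect K n (Y v) = 1)
    (hYY : ∑ v, ∑ v', seqExpect K n (fun l => Y v l * Y v' l) ≤
      (1 + δ) * (Fintype.card V : ℝ) ^ 2) :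
    seqExpect K n (fun l => (1 - (∑ v, Y v l) / Fintype.card V) ^ 2) ≤ δ := by
  have hV : (Fintype.card V : ℝ) ≠ 0 := by simp
  have hexpand (l : List X) : (1 - (∑ v, Y v l) / (Fintype.card V : ℝ)) ^ 2 =
      (1 - 2 / Fintype.card V * ∑ v, Y v l) +
        ((Fintype.card V : ℝ) ^ 2)⁻¹ * ∑ v, ∑ v', Y v l * Y v' l := by
    rw [← Finset.sum_mul_sum]
    field_simp
    ring
  have hsq : ((Fintype.card V : ℝ) ^ 2)⁻¹ *
      ∑ v, ∑ v', seqExpect K n (fun l => Y v l * Y v' l) ≤ 1 + δ := by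
    rwa [inv_mul_le_iff₀ (by positivity), mul_comm]
  simp only [hexpand, seqExpect_add, seqExpect_sub, seqExpect_const_mul, seqExpect_sum,
    seqExpect_one hK, hY, Finset.sum_const, Finset.card_univ, nsmul_eq_mul, mul_one,
    div_mul_cancel₀ _ hV]
  linarith

/-- One-episode control of the likelihood ratios `ℓ v` with respect to `K`: the cross moment of two
of them exceeds `1` only through the flags `R` and `F`, by the factors `G v v'` and `D`. -/
structure CrossMomentBound (K : List X → X → ℝ) (ℓ : V → X → ℝ) (R F : X → Bool)
    (G : V → V → ℝ) (D : ℝ) : Prop where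
  nonneg : ∀ v x, 0 ≤ ℓ v x
  mean_eq_one : ∀ v p, ∑ x, K p x * ℓ v x = 1
  one_le_corr : ∀ v v', 1 ≤ G v v'
  one_le_flag : 1 ≤ D
  cross_le : ∀ v v' p, ∑ x, K p x * (ℓ v x * ℓ v' x / flagWeight R F (G v v') D x) ≤ 1

/-- The expected number of entries not flagged by `F` in a sequence of length `T`, under the uniform
mixture over `v` of the laws with kernel `K * ℓ v`. -/
def mixtureMisses (K : List X → X → ℝ) (ℓ : V → X → ℝ) (F : X → Bool) (T : ℕ) : ℝ :=
  (∑ v, seqExpect (fun p x => K p x * ℓ v x) T fun l => (T : ℝ) - l.countP F) / Fintype.card V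

lemma seqExpect_active_le_mixtureMisses {K : List X → X → ℝ} (hK : ∀ p x, 0 ≤ K p x)
    {ℓ : V → X → ℝ} (hℓ : ∀ v x, 0 ≤ ℓ v x) {active : List X → Prop} [DecidablePred active]
    (hprefix : ∀ l x, active (l ++ [x]) → active l) (F : X → Bool) (T : ℕ) :
    seqExpect K T (fun l => if active l then
        (∑ v, seqProd (stoppedFactor active (ℓ v)) l) / Fintype.card V * ((T : ℝ) - l.countP F)
      else 0) ≤ mixtureMisses K ℓ F T := by
  have hmix : mixtureMisses K ℓ F T = seqExpect K T fun l =>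
      (∑ v, seqProd (fun _ x => ℓ v x) l) / Fintype.card V * ((T : ℝ) - l.countP F) := by
    simp only [mixtureMisses, seqExpect_mul_kernel, div_mul_eq_mul_div, Finset.sum_mul]
    simp only [div_eq_inv_mul, seqExpect_const_mul, seqExpect_sum]
  rw [hmix]
  refine seqExpect_mono hK fun l hl => ?_
  split_ifs with h
  · simp only [seqProd_stoppedFactor_of_active hprefix _ h, le_refl]
  · have hcount : (l.countP F : ℝ) ≤ T := by exact_mod_cast hl ▸ List.countP_le_length
    exact mul_nonneg (div_nonneg (Finset.sum_nonneg fun v _ => seqProd_nonneg (fun _ => hℓ v) l)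
      (Nat.cast_nonneg _)) (sub_nonneg.2 hcount)

lemma misses_sub_le_ite {T r f n₁ n₂ : ℕ} (hn₁ : 0 < n₁) (hn₂ : 0 < n₂) (hf : f ≤ T) (L : ℝ) :
    (T - f - (T / n₁ * r + T / n₂ * f) - (T / 8 + 2 * T * (1 - L) ^ 2) : ℝ) ≤
      if r < n₁ ∧ f < n₂ then L * (T - f) else 0 := by
  have hfT : (f : ℝ) ≤ T := by exact_mod_cast hf
  have hr0 : (0 : ℝ) ≤ T / n₁ * r := by positivity
  have hf0 : (0 : ℝ) ≤ T / n₂ * f := by positivity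
  have hL0 : (0 : ℝ) ≤ T / 8 + 2 * T * (1 - L) ^ 2 := by positivity
  split_ifs with h
  · have hdev : 1 - L ≤ 1 / 8 + 2 * (1 - L) ^ 2 := by nlinarith [sq_nonneg (1 - L - 1 / 4)]
    have : (1 - L) * (T - f) ≤ (1 / 8 + 2 * (1 - L) ^ 2) * T :=
      (mul_le_mul_of_nonneg_right hdev (by linarith)).trans
        (mul_le_mul_of_nonneg_left (by simp) (by positivity))
    linarith
  · have hexhausted {k n : ℕ} (hn : 0 < n) (hk : n ≤ k) : (T : ℝ) ≤ T / n * k := by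
      rw [div_mul_eq_mul_div, le_div_iff₀ (by positivity)]
      gcongr
    rw [not_and_or, not_lt, not_lt] at h
    have : (T : ℝ) ≤ T / n₁ * r + T / n₂ * f := by
      rcases h with h | h
      · linarith [hexhausted hn₁ h]
      · linarith [hexhausted hn₂ h]
    linarith [Nat.cast_nonneg (α := ℝ) f]

/-- The stopped mixture of the likelihood ratios is close to `1` in `L²`, so that up to `T / 4` the
misses under the mixture are those under `K`, unless a budget is exhausted, which has small
probability under `K` by Markov's inequality. -/
theorem CrossMomentBound.sub_le_mixtureMisses [Nonempty V] {K : List X → X → ℝ}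
    (hK : IsProbKernel K) {ℓ : V → X → ℝ} {R F : X → Bool} {G : V → V → ℝ} {D : ℝ}
    (hℓ : CrossMomentBound K ℓ R F G D) {n₁ n₂ : ℕ} (hn₁ : 0 < n₁) (hn₂ : 0 < n₂)
    (hG : ∑ v, ∑ v', G v v' ^ n₁ * D ^ n₂ ≤ (1 + 1 / 16) * (Fintype.card V : ℝ) ^ 2) (T : ℕ) :
    T - seqExpect K T (fun l => (l.countP F : ℝ)) -
        (T / n₁ * seqExpect K T (fun l => (l.countP R : ℝ)) +
          T / n₂ * seqExpect K T (fun l => (l.countP F : ℝ))) - T / 4 ≤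
      mixtureMisses K ℓ F T := by
  let L (l : List X) : ℝ :=
    (∑ v, seqProd (stoppedFactor (WithinBudget R F n₁ n₂) (ℓ v)) l) / Fintype.card V
  have hL : seqExpect K T (fun l => (1 - L l) ^ 2) ≤ 1 / 16 := by
    refine seqExpect_one_sub_average_sq_le hK.sum_eq_one
      (fun v => seqExpect_stoppedFactor_eq_one hK.sum_eq_one _ (hℓ.mean_eq_one v) T) ?_
    exact (Finset.sum_le_sum fun v _ => Finset.sum_le_sum fun v' _ =>
      hK.seqExpect_stopped_mul_stopped_le (hℓ.nonneg v) (hℓ.nonneg v') (hℓ.one_le_corr v v')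
        hℓ.one_le_flag (hℓ.cross_le v v') n₁ n₂ T).trans hG
  have hpoint := seqExpect_mono hK.nonneg fun l (hl : l.length = T) =>
    misses_sub_le_ite (r := l.countP R) hn₁ hn₂ (hl ▸ List.countP_le_length (p := F)) (L l)
  have hactive := seqExpect_active_le_mixtureMisses hK.nonneg hℓ.nonneg
    (WithinBudget.of_concat (R := R) (F := F) (n₁ := n₁) (n₂ := n₂)) F T
  have hlower := hpoint.trans hactive
  simp only [seqExpect_sub, seqExpect_add, seqExpect_const_mul,
    seqExpect_const hK.sum_eq_one] at hlower
  have : 2 * (T : ℝ) * seqExpect K T (fun l => (1 - L l) ^ 2) ≤ 2 * T * (1 / 16) := by gcongr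
  linarith

variable {Θ : Type*} [Fintype Θ]

lemma sum_seqExpect_countP_le {K : List X → X → ℝ} (hK : ∀ p x, 0 ≤ K p x) {R : Θ → X → Bool}
    {rev : X → Bool} {c : ℝ} (h : ∀ x, (#{θ | R θ x} : ℝ) ≤ if rev x then c else 0) (T : ℕ) :
    ∑ θ, seqExpect K T (fun l => (l.countP (R θ) : ℝ)) ≤
      c * seqExpect K T fun l => (l.countP rev : ℝ) := by
  rw [← seqExpect_sum, ← seqExpect_const_mul]
  exact seqExpect_mono hK fun l _ => sum_countP_le h l

section Averaging

variable [Nonempty V] {K : List X → X → ℝ} (hK : IsProbKernel K) {ℓ : Θ → V → X → ℝ}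
  {R F : Θ → X → Bool} {G : V → V → ℝ} {D : ℝ}
  (hℓ : ∀ θ, CrossMomentBound K (ℓ θ) (R θ) (F θ) G D) {n₁ n₂ : ℕ} (hn₁ : 0 < n₁) (hn₂ : 0 < n₂)
  (hG : ∑ v, ∑ v', G v v' ^ n₁ * D ^ n₂ ≤ (1 + 1 / 16) * (Fintype.card V : ℝ) ^ 2) {T : ℕ}
  {rev : X → Bool} {N : ℝ} (hN : 0 < N)
  (hR : ∀ x, (#{θ | R θ x} : ℝ) ≤ if rev x then Fintype.card Θ / N else 0)
  (hF : ∀ x, #{θ | F θ x} ≤ 1) (hΘ : 8 ≤ Fintype.card Θ)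
  (hΘT : 8 * (T : ℝ) ≤ Fintype.card Θ * n₂)

include hK hℓ hn₁ hn₂ hG hN hR hF hΘ hΘT

lemma card_mul_le_sum_mixtureMisses
    (hrev : seqExpect K T (fun l => (l.countP rev : ℝ)) ≤ N * n₁ / 8) :
    Fintype.card Θ * (3 / 8 * T) ≤ ∑ θ, mixtureMisses K (ℓ θ) (F θ) T := by
  set t : ℝ := (Fintype.card Θ : ℝ)
  have ht : 8 ≤ t := Nat.ofNat_le_cast.2 hΘ
  have hsumF : ∑ θ, seqExpect K T (fun l => (l.countP (F θ) : ℝ)) ≤ T := by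
    have := sum_seqExpect_countP_le hK.nonneg (rev := fun _ => true) (c := 1)
      (fun x => by simpa using hF x) T
    rwa [one_mul, seqExpect_congr (g := fun _ => (T : ℝ)) (fun l hl => by simp [hl]),
      seqExpect_const hK.sum_eq_one] at this
  have hsumR : ∑ θ, seqExpect K T (fun l => (l.countP (R θ) : ℝ)) ≤ t / 8 * n₁ :=
    calc _ ≤ t / N * _ := sum_seqExpect_countP_le hK.nonneg hR T
      _ ≤ t / N * (N * n₁ / 8) := by gcongr
      _ = t / 8 * n₁ := by field_simp
  have hsum := Finset.sum_le_sum fun θ (_ : θ ∈ (Finset.univ : Finset Θ)) =>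
    (hℓ θ).sub_le_mixtureMisses hK hn₁ hn₂ hG T
  simp only [Finset.sum_sub_distrib, ← Finset.mul_sum, Finset.sum_add_distrib, Finset.sum_const,
    Finset.card_univ, nsmul_eq_mul] at hsum
  have hbudgetR : T / n₁ * ∑ θ, seqExpect K T (fun l => (l.countP (R θ) : ℝ)) ≤ T * t / 8 :=
    calc _ ≤ T / n₁ * (t / 8 * n₁) := by gcongr
      _ = T * t / 8 := by field_simp
  have hbudgetF : T / n₂ * ∑ θ, seqExpect K T (fun l => (l.countP (F θ) : ℝ)) ≤ T * t / 8 :=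
    calc _ ≤ T / n₂ * (t / 8 * n₂) := by gcongr; linarith
      _ = T * t / 8 := by field_simp
  have : (T : ℝ) * 8 ≤ T * t := by gcongr
  linarith

/-- Few flags `rev` under `K` leave most `θ` undetected, which makes misses likely for them. -/
theorem le_null_or_exists_alternative_le {B ε : ℝ} (hε : 0 ≤ ε) (hB₁ : B ≤ N * n₁ / 16)
    (hB₂ : B ≤ 3 / 8 * ε * T) {reg₀ : ℝ} {reg : Θ → V → ℝ}
    (hreg₀ : 1 / 2 * seqExpect K T (fun l => (l.countP rev : ℝ)) ≤ reg₀)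
    (hreg : ∀ θ v, ε * seqExpect (fun p x => K p x * ℓ θ v x) T
      (fun l => (T : ℝ) - l.countP (F θ)) ≤ reg θ v) :
    B ≤ reg₀ ∨ ∃ θ v, B ≤ reg θ v := by
  by_contra! ⟨hnull, halt⟩
  have hmisses := card_mul_le_sum_mixtureMisses hK hℓ hn₁ hn₂ hG hN hR hF hΘ hΘT (by linarith)
  have : Nonempty Θ := Fintype.card_pos_iff.1 (by omega)
  have hθ (θ : Θ) : ε * mixtureMisses K (ℓ θ) (F θ) T < B := by
    rw [mixtureMisses, mul_div_assoc', div_lt_iff₀ (by positivity), Finset.mul_sum]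
    calc _ < ∑ _ : V, B := Finset.sum_lt_sum_of_nonempty Finset.univ_nonempty fun v _ =>
          (hreg θ v).trans_lt (halt θ v)
      _ = _ := by simp [mul_comm]
  have hlt : ε * ∑ θ, mixtureMisses K (ℓ θ) (F θ) T < Fintype.card Θ * B := by
    rw [Finset.mul_sum]
    calc _ < ∑ _ : Θ, B :=
          Finset.sum_lt_sum_of_nonempty Finset.univ_nonempty fun θ _ => hθ θ
      _ = _ := by simp
  have hge : (Fintype.card Θ : ℝ) * B ≤ ε * ∑ θ, mixtureMisses K (ℓ θ) (F θ) T :=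
    calc (Fintype.card Θ : ℝ) * B ≤ Fintype.card Θ * (3 / 8 * ε * T) := by gcongr
      _ = ε * (Fintype.card Θ * (3 / 8 * T)) := by ring
      _ ≤ _ := by gcongr
  exact hlt.not_ge hge

end Averaging

end StoppedLikelihoodRatios

/-! ### The combination lock -/

section CombinationLock

/-- The sign `±1` of a Boolean. -/
def boolSign (b : Bool) : ℝ := if b then 1 else -1

@[simp] lemma boolSign_true : boolSign true = 1 := rfl

@[simp] lemma boolSign_false : boolSign false = -1 := rfl

@[simp] lemma abs_boolSign (b : Bool) : |boolSign b| = 1 := by cases b <;> simp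

lemma single_one_nonneg {ι : Type*} [DecidableEq ι] (i j : ι) : 0 ≤ (Pi.single i 1 : ι → ℝ) j := by
  simp only [Pi.single_apply]; split_ifs <;> norm_num

lemma sum_single_one_mul {ι : Type*} [DecidableEq ι] [Fintype ι] (i : ι) (f : ι → ℝ) :
    ∑ j, (Pi.single i 1 : ι → ℝ) j * f j = f i := by
  simp [Pi.single_apply]

/-- The law of `c b`, where the coin `b` shows `true` with probability `1 / 2 + δ`. -/
def coinLaw {ι : Type*} [DecidableEq ι] (δ : ℝ) (c : Bool → ι) (i : ι) : ℝ :=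
  (1 / 2 + δ) * (Pi.single (c true) 1 : ι → ℝ) i + (1 / 2 - δ) * (Pi.single (c false) 1 : ι → ℝ) i

lemma sum_coinLaw_mul {ι : Type*} [DecidableEq ι] [Fintype ι] (δ : ℝ) (c : Bool → ι)
    (f : ι → ℝ) :
    ∑ i, coinLaw δ c i * f i = (1 / 2 + δ) * f (c true) + (1 / 2 - δ) * f (c false) := by
  simp only [coinLaw, add_mul, mul_assoc, Finset.sum_add_distrib, ← Finset.mul_sum,
    sum_single_one_mul]

lemma sum_coinLaw {ι : Type*} [DecidableEq ι] [Fintype ι] (δ : ℝ) (c : Bool → ι) :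
    ∑ i, coinLaw δ c i = 1 := by
  have h := sum_coinLaw_mul δ c fun _ => 1
  simp only [mul_one] at h
  rw [h]; ring

lemma coinLaw_nonneg {ι : Type*} [DecidableEq ι] {δ : ℝ} (hδ : |δ| ≤ 1 / 2) (c : Bool → ι)
    (i : ι) : 0 ≤ coinLaw δ c i := by
  obtain ⟨hl, hr⟩ := abs_le.1 hδ
  exact add_nonneg (mul_nonneg (by linarith) (single_one_nonneg _ _))
    (mul_nonneg (by linarith) (single_one_nonneg _ _))

/-- Latent states of a combination lock with registers `X`: the registers, the two sides of the
hidden coin, the two signal states reached by revealing the coin, and the dead state. -/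
inductive LockState (X : Type)
  | register (x : X)
  | coin (b : Bool)
  | signal (b : Bool)
  | dead
  deriving DecidableEq, Fintype

/-- Observations of a combination lock: the registers, `2 n` signals, `blank` for a hidden coin (or
the losing coin at the last step), `dead`, and `success` for the winning coin at the last step. -/
inductive LockObs (X : Type) (n : ℕ)
  | register (x : X)
  | signal (i : Fin n) (d : Bool)
  | blank
  | dead
  | success
  deriving DecidableEq, Fintype

variable {X : Type} {n : ℕ}

lemma LockState.sum_univ [Fintype X] (f : LockState X → ℝ) :
    ∑ s, f s = (∑ x, f (.register x)) + (∑ b, f (.coin b)) + (∑ b, f (.signal b)) + f .dead := by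
  rw [← (proxy_equiv% (LockState X)).sum_comp]
  simp only [Fintype.sum_sum_type, Fintype.univ_unit, Finset.sum_singleton]
  change (∑ x, f (.register x)) + ((∑ b, f (.coin b)) + ((∑ b, f (.signal b)) + f .dead)) = _
  ring

lemma LockState.card_eq [Fintype X] : Fintype.card (LockState X) = Fintype.card X + 5 := by
  rw [← Fintype.card_congr (proxy_equiv% (LockState X))]
  simp [Fintype.card_sum]

lemma LockObs.sum_univ [Fintype X] (f : LockObs X n → ℝ) :
    ∑ o, f o = (∑ x, f (.register x)) + (∑ i, ∑ d, f (.signal i d)) + f .blank + f .dead +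
      f .success := by
  rw [← (proxy_equiv% (LockObs X n)).sum_comp]
  simp only [Fintype.sum_sum_type, Fintype.sum_sigma, Fintype.univ_unit, Finset.sum_singleton]
  change (∑ x, f (.register x)) + ((∑ i, ∑ d, f (.signal i d)) +
    (f .blank + (f .dead + f .success))) = _
  ring

lemma LockObs.card_eq [Fintype X] :
    Fintype.card (LockObs X n) = Fintype.card X + 2 * n + 3 := by
  rw [← Fintype.card_congr (proxy_equiv% (LockObs X n))]
  simp [Fintype.card_sum]
  ring

/-- The law of a signal `(i, d)` with `i` uniform and a sign `d` that has correlation `δ` with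
`v i`. -/
def signalLaw (v : Fin n → Bool) (δ : ℝ) : LockObs X n → ℝ
  | .signal i d => (1 + δ * (boolSign d * boolSign (v i))) / (2 * n)
  | _ => 0

lemma signalLaw_nonneg (v : Fin n → Bool) {δ : ℝ} (hδ : |δ| ≤ 1) (o : LockObs X n) :
    0 ≤ signalLaw v δ o := by
  cases o with
  | signal i d =>
    have hcorr : |δ * (boolSign d * boolSign (v i))| ≤ 1 := by simpa [abs_mul]
    exact div_nonneg (by linarith [(abs_le.1 hcorr).1]) (by positivity)
  | _ => exact le_rfl

lemma sum_signalLaw_mul [Fintype X] (v : Fin n → Bool) (δ : ℝ) (f : LockObs X n → ℝ) :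
    ∑ o, signalLaw v δ o * f o =
      ∑ i, ∑ d, (1 + δ * (boolSign d * boolSign (v i))) / (2 * n) * f (.signal i d) := by
  simp [LockObs.sum_univ, signalLaw]

lemma sum_signalLaw [Fintype X] [NeZero n] (v : Fin n → Bool) (δ : ℝ) :
    ∑ o : LockObs X n, signalLaw v δ o = 1 := by
  have hn : (n : ℝ) ≠ 0 := NeZero.ne _
  have h := sum_signalLaw_mul (X := X) v δ fun _ => 1
  simp only [mul_one, Fintype.sum_bool, boolSign_true, boolSign_false, ← add_div] at h
  rw [h, Finset.sum_congr rfl fun i _ => show _ = 1 / (n : ℝ) by field_simp; ring]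
  simp [hn]

section Key

variable (k w L r A : ℕ)

/-- The places where the register part can be left: one of `w` steps, a register, and an action
other than the two shift actions `0` and `1`. -/
abbrev Location : Type := Fin w × Fin (2 ^ k) × Fin (A - 2)

/-- The passwords: `L` actions other than the `r` revealing ones. -/
abbrev Password : Type := Fin L → {a : Fin A // r ≤ a}

/-- The hidden parameter of a combination lock. -/
abbrev LockKey : Type := Location k w A × Password L r A

variable {k w L r A}

/-- Leaving the register `x` by the action `a` at step `h` happens at the hidden location. The first
`k` steps are left for reaching an arbitrary register. -/
def LockKey.IsEntry (θ : LockKey k w L r A) (h : ℕ) (x : Fin (2 ^ k)) (a : Fin A) : Prop :=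
  h = k + 1 + θ.1.1 ∧ x = θ.1.2.1 ∧ (a : ℕ) = θ.1.2.2 + 2

/-- Playing `a` at step `h` does not contradict the password, which occupies the `L` steps
`k + w + 1, …, k + w + L` just before the last one. -/
def LockKey.Accepts (θ : LockKey k w L r A) (h : ℕ) (a : Fin A) : Prop :=
  ∀ i : Fin L, h = k + w + 1 + i → a = θ.2 i

/-- Shift a bit into the register. -/
def shift (x : Fin (2 ^ k)) (a : Fin A) : Fin (2 ^ k) :=
  Fin.ofNat (2 ^ k) (2 * x + a)

open Classical in
/-- Transitions of a combination lock. Actions `0` and `1` shift the register, any other action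
starts the coin, with bias `ε` at the hidden location and fair elsewhere. On the coin, an action
below `r` reveals, an accepted action keeps the coin, and a wrong one tosses a fair coin. -/
def lockTrans (θ : LockKey k w L r A) (ε : ℝ) (h : ℕ) :
    LockState (Fin (2 ^ k)) → Fin A → LockState (Fin (2 ^ k)) → ℝ
  | .register x, a =>
    if a.1 < 2 then Pi.single (.register (shift x a)) 1
    else coinLaw (if θ.IsEntry h x a then ε else 0) .coin
  | .coin b, a =>
    if a.1 < r then Pi.single (.signal b) 1
    else if θ.Accepts h a then Pi.single (.coin b) 1 else coinLaw 0 .coin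
  | _, _ => Pi.single .dead 1

lemma lockTrans_nonneg (θ : LockKey k w L r A) {ε : ℝ} (hε : |ε| ≤ 1 / 2) (h : ℕ)
    (s : LockState (Fin (2 ^ k))) (a : Fin A) (s' : LockState (Fin (2 ^ k))) :
    0 ≤ lockTrans θ ε h s a s' := by
  have hfair : |(0 : ℝ)| ≤ 1 / 2 := by norm_num
  cases s <;> simp only [lockTrans] <;> (try split_ifs) <;>
    first | exact single_one_nonneg _ _ | exact coinLaw_nonneg ‹_› _ _

lemma sum_lockTrans (θ : LockKey k w L r A) (ε : ℝ) (h : ℕ) (s : LockState (Fin (2 ^ k)))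
    (a : Fin A) : ∑ s', lockTrans θ ε h s a s' = 1 := by
  cases s <;> simp only [lockTrans] <;> (try split_ifs) <;> simp [sum_coinLaw]

end Key

/-- Emissions of a combination lock with last step `H`. Registers are visible, a coin is invisible
before the last step, and a signal state emits a signal of correlation `±σ` with the secret `v`. -/
def lockEmit [DecidableEq X] (H : ℕ) (v : Fin n → Bool) (σ : ℝ) (h : ℕ) :
    LockState X → LockObs X n → ℝ
  | .register x => Pi.single (.register x) 1
  | .coin b => Pi.single (if h = H ∧ b then .success else .blank) 1
  | .signal b => signalLaw v (boolSign b * σ)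
  | .dead => Pi.single .dead 1

lemma lockEmit_nonneg [DecidableEq X] (H : ℕ) (v : Fin n → Bool) {σ : ℝ} (hσ : |σ| ≤ 1) (h : ℕ)
    (s : LockState X) (o : LockObs X n) : 0 ≤ lockEmit H v σ h s o := by
  cases s with
  | signal b => exact signalLaw_nonneg v (by simpa [abs_mul]) o
  | _ => exact single_one_nonneg _ _

lemma sum_lockEmit [DecidableEq X] [Fintype X] [NeZero n] (H : ℕ) (v : Fin n → Bool) (σ : ℝ)
    (h : ℕ) (s : LockState X) : ∑ o, lockEmit H v σ h s o = 1 := by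
  cases s <;> simp [lockEmit, sum_signalLaw]

variable {k w L r A : ℕ} {State Obs : Type} [Fintype State] [Fintype Obs]

/-- The combination lock with key `θ`, secret signs `v`, bias `ε` and signal strength `σ`, carried
along bijections so that it can live on `Fin`. For `ε = 0` (the null instance) the key has no
influence on the observations. -/
def combinationLock [NeZero n] (e : State ≃ LockState (Fin (2 ^ k)))
    (eo : Obs ≃ LockObs (Fin (2 ^ k)) n) {σ : ℝ} (hσ : |σ| ≤ 1) (θ : LockKey k w L r A)
    (v : Fin n → Bool) {ε : ℝ} (hε : |ε| ≤ 1 / 2) : POMDP State Obs (Fin A) (k + w + L + 1) where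
  init s := (Pi.single (.register 0) 1 : LockState (Fin (2 ^ k)) → ℝ) (e s)
  init_nonneg _ := single_one_nonneg _ _
  init_sum := by rw [e.sum_comp (Pi.single (.register 0) 1)]; simp
  trans h s a s' := lockTrans θ ε h (e s) a (e s')
  trans_nonneg _ _ _ _ := lockTrans_nonneg θ hε _ _ _ _
  trans_sum h s a := by rw [e.sum_comp (lockTrans θ ε h (e s) a), sum_lockTrans]
  emit h s o := lockEmit (k + w + L + 1) v σ h (e s) (eo o)
  emit_nonneg _ _ _ := lockEmit_nonneg _ v hσ _ _ _
  emit_sum h s := by rw [eo.sum_comp (lockEmit (k + w + L + 1) v σ h (e s)), sum_lockEmit]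
  reward h o _ := if h = k + w + L + 1 ∧ eo o = .success then 1 else 0
  reward_nonneg _ _ _ := by split_ifs <;> norm_num
  reward_le_one _ _ _ := by split_ifs <;> norm_num
  reward_total τ := by
    rw [Fin.sum_univ_castSucc, Finset.sum_eq_zero fun i _ => if_neg (by simp; omega)]
    split_ifs <;> norm_num

end CombinationLock

section LockFilter

variable {k w L r n A : ℕ}

/-- What the past actions say about a combination lock with a given key: the current register, or
the phase (coin, signal, dead) together with a flag saying whether the coin was started at the
hidden location and every later action has been accepted. -/
inductive LockMode (k : ℕ)
  | register (x : Fin (2 ^ k))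
  | coin (b : Bool)
  | signal (b : Bool)
  | dead (b : Bool)

open Classical in
/-- Update of the mode by an action at step `h`. -/
def LockMode.step (θ : LockKey k w L r A) (h : ℕ) : LockMode k → Fin A → LockMode k
  | .register x, a => if a.1 < 2 then .register (shift x a) else .coin (θ.IsEntry h x a)
  | .coin b, a => if a.1 < r then .signal b else .coin (b && θ.Accepts h a)
  | .signal b, _ => .dead b
  | .dead b, _ => .dead b

/-- The bias of the coin under a flag. -/
def flagBias (ε : ℝ) (b : Bool) : ℝ := if b then ε else 0

lemma abs_flagBias_le (ε : ℝ) (b : Bool) : |flagBias ε b| ≤ |ε| := by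
  cases b <;> simp [flagBias]

@[simp] lemma flagBias_zero (b : Bool) : flagBias 0 b = 0 := by simp [flagBias]

/-- The posterior of the latent state in a mode. -/
def LockMode.posterior (ε : ℝ) : LockMode k → LockState (Fin (2 ^ k)) → ℝ
  | .register x => Pi.single (.register x) 1
  | .coin b => coinLaw (flagBias ε b) .coin
  | .signal b => coinLaw (flagBias ε b) .signal
  | .dead _ => Pi.single .dead 1

/-- The law of the observation at step `h` in a mode, for last step `H`. -/
def LockMode.obsLaw (H : ℕ) (v : Fin n → Bool) (σ ε : ℝ) (h : ℕ) (u : LockMode k)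
    (o : LockObs (Fin (2 ^ k)) n) : ℝ :=
  ∑ s, u.posterior ε s * lockEmit H v σ h s o

lemma LockMode.posterior_nonneg {ε : ℝ} (hε : |ε| ≤ 1 / 2) (u : LockMode k)
    (s : LockState (Fin (2 ^ k))) : 0 ≤ u.posterior ε s := by
  cases u <;> first
    | exact single_one_nonneg _ _
    | exact coinLaw_nonneg ((abs_flagBias_le _ _).trans hε) _ _

lemma LockMode.sum_posterior (ε : ℝ) (u : LockMode k) : ∑ s, u.posterior ε s = 1 := by
  cases u <;> simp [posterior, sum_coinLaw]

lemma LockMode.obsLaw_nonneg (H : ℕ) (v : Fin n → Bool) {σ ε : ℝ} (hσ : |σ| ≤ 1)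
    (hε : |ε| ≤ 1 / 2) (h : ℕ) (u : LockMode k) (o : LockObs (Fin (2 ^ k)) n) :
    0 ≤ u.obsLaw H v σ ε h o :=
  Finset.sum_nonneg fun s _ => mul_nonneg (u.posterior_nonneg hε s) (lockEmit_nonneg H v hσ h s o)

lemma LockMode.sum_obsLaw [NeZero n] (H : ℕ) (v : Fin n → Bool) (σ ε : ℝ) (h : ℕ)
    (u : LockMode k) : ∑ o, u.obsLaw H v σ ε h o = 1 := by
  simp only [obsLaw]
  rw [Finset.sum_comm]
  simp only [← Finset.mul_sum, sum_lockEmit, mul_one, sum_posterior]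

namespace LockMode

variable (H : ℕ) (v : Fin n → Bool) (σ ε : ℝ) (h : ℕ)

@[simp] lemma obsLaw_register (x : Fin (2 ^ k)) :
    (register x).obsLaw H v σ ε h = Pi.single (.register x) 1 :=
  funext fun _ => sum_single_one_mul _ _

@[simp] lemma obsLaw_dead (b : Bool) :
    (dead b : LockMode k).obsLaw H v σ ε h = Pi.single .dead 1 :=
  funext fun _ => sum_single_one_mul _ _

@[simp] lemma obsLaw_coin_of_ne {H h : ℕ} (hh : h ≠ H) (b : Bool) :
    (coin b : LockMode k).obsLaw H v σ ε h = Pi.single .blank 1 := by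
  funext o
  simp only [obsLaw, posterior, sum_coinLaw_mul, lockEmit, hh, false_and, if_false]
  ring

@[simp] lemma obsLaw_coin_self (b : Bool) :
    (coin b : LockMode k).obsLaw H v σ ε H =
      coinLaw (flagBias ε b) fun c => if c then .success else .blank := by
  funext o
  simp only [obsLaw, posterior, sum_coinLaw_mul]
  simp only [coinLaw, lockEmit, true_and]

@[simp] lemma obsLaw_signal (b : Bool) :
    (signal b : LockMode k).obsLaw H v σ ε h = signalLaw v (2 * flagBias ε b * σ) := by
  funext o
  simp only [obsLaw, posterior, sum_coinLaw_mul, lockEmit, boolSign_true, boolSign_false]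
  cases o <;> simp only [signalLaw] <;> ring

end LockMode

variable {State Obs : Type} [Fintype State] [Fintype Obs]

/-- The automaton that follows the modes of the key `θ`. -/
def lockAutomaton (eo : Obs ≃ LockObs (Fin (2 ^ k)) n) (θ : LockKey k w L r A)
    (v : Fin n → Bool) (σ ε : ℝ) : ActionAutomaton (LockMode k) Obs (Fin A) where
  start := .register 0
  step := LockMode.step θ
  obsLaw h u o := u.obsLaw (k + w + L + 1) v σ ε h (eo o)

open Classical in
lemma sum_posterior_mul_lockTrans {θ θ' : LockKey k w L r A} {ε : ℝ} (hθ : θ' = θ ∨ ε = 0)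
    {H : ℕ} (v : Fin n → Bool) (σ : ℝ) {h : ℕ} (hh : h ≠ H) (u : LockMode k)
    (o : LockObs (Fin (2 ^ k)) n) (a : Fin A) (s' : LockState (Fin (2 ^ k))) :
    ∑ s, u.posterior ε s * lockEmit H v σ h s o * lockTrans θ' ε h s a s' =
      u.obsLaw H v σ ε h o * (LockMode.step θ h u a).posterior ε s' := by
  have hentry (x) : (if θ'.IsEntry h x a then ε else 0) = flagBias ε (θ.IsEntry h x a) := by
    rcases hθ with rfl | rfl <;> simp [flagBias]
  have haccept (b) : (if θ'.Accepts h a then flagBias ε b else 0) =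
      flagBias ε (b && θ.Accepts h a) := by
    rcases hθ with rfl | rfl
    · by_cases hacc : θ'.Accepts h a <;> simp [flagBias, hacc]
    · simp
  cases u with
  | register x =>
    simp only [LockMode.posterior, mul_assoc, sum_single_one_mul, lockEmit, lockTrans,
      LockMode.obsLaw_register, LockMode.step, hentry]
    split_ifs <;> rfl
  | coin b =>
    simp only [LockMode.posterior, mul_assoc, sum_coinLaw_mul, lockEmit, lockTrans, hh, false_and,
      if_false, LockMode.obsLaw_coin_of_ne _ _ _ hh, LockMode.step]
    by_cases hr : a.1 < r
    · simp only [hr, if_true, coinLaw]; ring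
    · have hbias := haccept b
      simp only [hr, if_false, ← hbias]
      split_ifs <;> simp only [coinLaw] <;> ring
  | signal b =>
    simp only [LockMode.posterior, mul_assoc, sum_coinLaw_mul, lockTrans, LockMode.obsLaw,
      LockMode.step]
    ring
  | dead b =>
    simp only [LockMode.posterior, mul_assoc, sum_single_one_mul, lockTrans, LockMode.obsLaw,
      LockMode.step]

/-- For `ε = 0` the instance need not have the key whose modes are followed: the flags then carry no
information. -/
theorem combinationLock_isFilter [NeZero n] (e : State ≃ LockState (Fin (2 ^ k)))
    (eo : Obs ≃ LockObs (Fin (2 ^ k)) n) {σ : ℝ} (hσ : |σ| ≤ 1) {θ θ' : LockKey k w L r A}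
    (v : Fin n → Bool) {ε : ℝ} (hε : |ε| ≤ 1 / 2) (hθ : θ' = θ ∨ ε = 0) :
    (lockAutomaton eo θ v σ ε).IsFilter (combinationLock e eo hσ θ' v hε)
      (fun u s => u.posterior ε (e s)) where
  init _ := rfl
  step h _ hh u o a s' := by
    have hsum := sum_posterior_mul_lockTrans hθ v σ (H := k + w + L + 1) (h := h) (by omega) u
      (eo o) a (e s')
    rwa [← e.sum_comp] at hsum
  last u o := e.sum_comp fun s => u.posterior ε s * lockEmit _ v σ _ s (eo o)

end LockFilter

section Likelihood

variable {k n : ℕ}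

/-- The correlation of two sign vectors. -/
def signCorr {n : ℕ} (v v' : Fin n → Bool) : ℝ := ∑ i, boolSign (v i) * boolSign (v' i)

namespace LockMode

variable (H : ℕ) (v v' v₀ : Fin n → Bool) (σ ε : ℝ) (h : ℕ)

/-- The bias of the coin (hidden or revealed) in a mode. -/
def bias (ε : ℝ) : LockMode k → ℝ
  | .coin b | .signal b => flagBias ε b
  | _ => 0

/-- The score of an observation at step `h`: half the derivative of its log-likelihood in the bias
of the coin, at bias `0`. -/
def score : LockMode k → LockObs (Fin (2 ^ k)) n → ℝ
  | .coin _, .success => if h = H then 1 else 0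
  | .coin _, .blank => if h = H then -1 else 0
  | .signal _, .signal i d => σ * (boolSign d * boolSign (v i))
  | _, _ => 0

/-- The covariance, in the null instance, of the scores for the secrets `v` and `v'`. -/
def scoreCov : LockMode k → ℝ
  | .coin _ => if h = H then 1 else 0
  | .signal _ => σ ^ 2 * (signCorr v v' / n)
  | _ => 0

/-- The likelihood ratio of an observation at step `h` against the null instance. -/
def likelihoodRatio (u : LockMode k) (o : LockObs (Fin (2 ^ k)) n) : ℝ :=
  1 + 2 * u.bias ε * u.score H v σ h o

lemma abs_bias_le (u : LockMode k) : |u.bias ε| ≤ |ε| := by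
  cases u <;> simp [bias, abs_flagBias_le]

variable {σ ε} in
lemma abs_score_le (hσ : |σ| ≤ 1) (u : LockMode k) (o : LockObs (Fin (2 ^ k)) n) :
    |u.score H v σ h o| ≤ 1 := by
  cases u <;> cases o <;> simp only [score, abs_zero, zero_le_one] <;>
    first | (simpa [abs_mul]) | (split_ifs <;> norm_num)

variable {σ ε} in
lemma likelihoodRatio_nonneg (hσ : |σ| ≤ 1) (hε : |ε| ≤ 1 / 2) (u : LockMode k)
    (o : LockObs (Fin (2 ^ k)) n) : 0 ≤ u.likelihoodRatio H v σ ε h o := by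
  have hprod : |u.bias ε * u.score H v σ h o| ≤ 1 / 2 * 1 := by
    rw [abs_mul]
    exact mul_le_mul ((u.abs_bias_le ε).trans hε) (u.abs_score_le H v h hσ o) (abs_nonneg _)
      (by norm_num)
  rw [likelihoodRatio, mul_assoc]
  linarith [(abs_le.1 hprod).1]

lemma obsLaw_mul_likelihoodRatio (u : LockMode k) (o : LockObs (Fin (2 ^ k)) n) :
    u.obsLaw H v₀ σ 0 h o * u.likelihoodRatio H v σ ε h o = u.obsLaw H v σ ε h o := by
  cases u with
  | register x => simp [likelihoodRatio, bias]
  | dead b => simp [likelihoodRatio, bias]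
  | signal b =>
    cases o <;>
      simp only [obsLaw_signal, flagBias_zero, likelihoodRatio, bias, score, signalLaw] <;> ring
  | coin b =>
    by_cases hh : h = H
    · subst hh
      cases o <;> simp [likelihoodRatio, bias, score, coinLaw] <;> ring
    · cases o <;> simp [likelihoodRatio, bias, score, hh]

lemma sum_obsLaw_mul_score (u : LockMode k) :
    ∑ o, u.obsLaw H v₀ σ 0 h o * u.score H v σ h o = 0 := by
  cases u with
  | register x => simp [score]
  | dead b => simp [score]
  | signal b =>
    simp only [obsLaw_signal, sum_signalLaw_mul, score, flagBias_zero]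
    simp
  | coin b =>
    by_cases hh : h = H
    · subst hh
      simp [sum_coinLaw_mul, score]
    · simp [hh, sum_single_one_mul, score]

variable [NeZero n]

lemma sum_obsLaw_mul_score_mul_score (u : LockMode k) :
    ∑ o, u.obsLaw H v₀ σ 0 h o * (u.score H v σ h o * u.score H v' σ h o) =
      u.scoreCov H v v' σ h := by
  cases u with
  | register x => simp [score, scoreCov]
  | dead b => simp [score, scoreCov]
  | signal b =>
    have hn : (n : ℝ) ≠ 0 := NeZero.ne _
    simp only [obsLaw_signal, sum_signalLaw_mul, score, scoreCov, signCorr, flagBias_zero,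
      Finset.sum_div, Finset.mul_sum, Fintype.sum_bool, boolSign_true, boolSign_false]
    refine Finset.sum_congr rfl fun i _ => ?_
    field_simp
    ring
  | coin b =>
    by_cases hh : h = H
    · subst hh
      simp [sum_coinLaw_mul, score, scoreCov]
      norm_num
    · simp [hh, sum_single_one_mul, score, scoreCov]

lemma sum_obsLaw_mul_likelihoodRatio_mul (u : LockMode k) :
    ∑ o, u.obsLaw H v₀ σ 0 h o *
        (u.likelihoodRatio H v σ ε h o * u.likelihoodRatio H v' σ ε h o) =
      1 + (2 * u.bias ε) ^ 2 * u.scoreCov H v v' σ h := by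
  have hexpand (o : LockObs (Fin (2 ^ k)) n) : u.obsLaw H v₀ σ 0 h o *
      (u.likelihoodRatio H v σ ε h o * u.likelihoodRatio H v' σ ε h o) =
      u.obsLaw H v₀ σ 0 h o + 2 * u.bias ε * (u.obsLaw H v₀ σ 0 h o * u.score H v σ h o) +
        2 * u.bias ε * (u.obsLaw H v₀ σ 0 h o * u.score H v' σ h o) +
        (2 * u.bias ε) ^ 2 *
          (u.obsLaw H v₀ σ 0 h o * (u.score H v σ h o * u.score H v' σ h o)) := by
    simp only [likelihoodRatio]; ring
  simp only [hexpand, Finset.sum_add_distrib, ← Finset.mul_sum, sum_obsLaw, sum_obsLaw_mul_score,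
    sum_obsLaw_mul_score_mul_score]
  ring

/-- The factor that a step contributes to the cross moment bound of an episode: `G` at a signal from
the hidden location, `D` at the last step of a correctly played coin. -/
def stepWeight (H : ℕ) (G D : ℝ) (h : ℕ) : LockMode k → ℝ
  | .coin b => if h = H ∧ b then D else 1
  | .signal b => if b then G else 1
  | _ => 1

lemma stepWeight_pos {G D : ℝ} (hG : 0 < G) (hD : 0 < D) (u : LockMode k) :
    0 < u.stepWeight H G D h := by
  cases u <;> simp only [stepWeight] <;> (try split_ifs) <;> first | assumption | exact one_pos

end LockMode

/-- A bound for the cross moment of the likelihood ratios of a signal for the secrets `v` and `v'`,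
truncated at `1` so that it can be raised to powers. -/
def signalCrossBound {n : ℕ} (c : ℝ) (v v' : Fin n → Bool) : ℝ :=
  1 + max 0 (c * (signCorr v v' / n))

lemma one_le_signalCrossBound {n : ℕ} (c : ℝ) (v v' : Fin n → Bool) :
    1 ≤ signalCrossBound c v v' :=
  le_add_of_nonneg_right (le_max_left _ _)

lemma LockMode.sum_obsLaw_mul_likelihoodRatio_mul_le [NeZero n] (H : ℕ) (v v' v₀ : Fin n → Bool)
    (σ ε : ℝ) (h : ℕ) (u : LockMode k) :
    ∑ o, u.obsLaw H v₀ σ 0 h o *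
        (u.likelihoodRatio H v σ ε h o * u.likelihoodRatio H v' σ ε h o) ≤
      u.stepWeight H (signalCrossBound ((2 * ε * σ) ^ 2) v v') (1 + 4 * ε ^ 2) h := by
  rw [sum_obsLaw_mul_likelihoodRatio_mul]
  cases u with
  | register x => simp [bias, stepWeight]
  | dead b => simp [bias, stepWeight]
  | signal b =>
    cases b
    · simp [bias, flagBias, stepWeight]
    · calc 1 + (2 * ε) ^ 2 * (σ ^ 2 * (signCorr v v' / n))
          = 1 + (2 * ε * σ) ^ 2 * (signCorr v v' / n) := by ring
        _ ≤ _ := add_le_add_right (le_max_right _ _) _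
  | coin b =>
    by_cases hh : h = H <;> cases b <;>
      simp [bias, flagBias, stepWeight, scoreCov, hh, mul_pow]
    norm_num

end Likelihood

section Flags

variable {k w L r A n : ℕ} {Obs : Type}

/-- The mode, relative to the key `θ`, after a history. -/
def LockKey.mode (θ : LockKey k w L r A) (l : List (Obs × Fin A)) : LockMode k :=
  l.reverseRecOn (.register 0) fun p x u => LockMode.step θ (p.length + 1) u x.2

@[simp] lemma LockKey.mode_nil (θ : LockKey k w L r A) :
    θ.mode ([] : List (Obs × Fin A)) = .register 0 := by
  simp [mode]

lemma LockKey.mode_concat (θ : LockKey k w L r A) (l : List (Obs × Fin A)) (x : Obs × Fin A) :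
    θ.mode (l ++ [x]) = LockMode.step θ (l.length + 1) (θ.mode l) x.2 := by
  simp [mode]

lemma run_lockAutomaton (eo : Obs ≃ LockObs (Fin (2 ^ k)) n) (θ : LockKey k w L r A)
    (v : Fin n → Bool) (σ ε : ℝ) (l : List (Obs × Fin A)) :
    (lockAutomaton eo θ v σ ε).run l = θ.mode l := rfl

namespace LockMode

/-- The coin was started at the hidden location and every action since has been accepted. -/
def isUnlocked : LockMode k → Bool
  | .coin b => b
  | _ => false

/-- The coin has been revealed. -/
def hasRevealed : LockMode k → Bool
  | .signal _ | .dead _ => true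
  | _ => false

/-- The coin has been revealed while it was unlocked. -/
def hasRevealedUnlocked : LockMode k → Bool
  | .signal b | .dead b => b
  | _ => false

/-- The flag of a mode; registers carry none. -/
def flag : LockMode k → Bool
  | .register _ => false
  | .coin b | .signal b | .dead b => b

/-- The mode with its flag removed. What remains does not depend on the key. -/
def eraseFlag : LockMode k → LockMode k
  | .register x => .register x
  | .coin _ => .coin false
  | .signal _ => .signal false
  | .dead _ => .dead false

lemma flag_of_isUnlocked {u : LockMode k} (hu : u.isUnlocked) : u.flag := by
  cases u <;> simp_all [isUnlocked, flag]

lemma flag_of_hasRevealedUnlocked {u : LockMode k} (hu : u.hasRevealedUnlocked) : u.flag := by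
  cases u <;> simp_all [hasRevealedUnlocked, flag]

lemma hasRevealed_of_hasRevealedUnlocked {u : LockMode k} (hu : u.hasRevealedUnlocked) :
    u.hasRevealed := by
  cases u <;> simp_all [hasRevealedUnlocked, hasRevealed]

@[simp] lemma hasRevealed_eraseFlag (u : LockMode k) : u.eraseFlag.hasRevealed = u.hasRevealed := by
  cases u <;> rfl

lemma eraseFlag_step (θ θ' : LockKey k w L r A) (h : ℕ) {u u' : LockMode k} (a : Fin A)
    (hu : u.eraseFlag = u'.eraseFlag) :
    (LockMode.step θ h u a).eraseFlag = (LockMode.step θ' h u' a).eraseFlag := by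
  cases u <;> cases u' <;> simp only [eraseFlag, register.injEq, reduceCtorEq] at hu <;>
    simp only [LockMode.step, hu] <;> (try split_ifs) <;> rfl

end LockMode

namespace LockKey

open LockMode

lemma eraseFlag_mode (θ θ' : LockKey k w L r A) (l : List (Obs × Fin A)) :
    (θ.mode l).eraseFlag = (θ'.mode l).eraseFlag := by
  induction l using List.reverseRecOn with
  | nil => simp
  | append_singleton l x ih =>
    rw [mode_concat, mode_concat]
    exact eraseFlag_step _ _ _ _ ih

lemma hasRevealed_mode (θ θ' : LockKey k w L r A) (l : List (Obs × Fin A)) :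
    (θ.mode l).hasRevealed = (θ'.mode l).hasRevealed := by
  rw [← hasRevealed_eraseFlag, eraseFlag_mode θ θ', hasRevealed_eraseFlag]

lemma IsEntry.location_eq {θ θ' : LockKey k w L r A} {h : ℕ} {x : Fin (2 ^ k)} {a : Fin A}
    (hθ : θ.IsEntry h x a) (hθ' : θ'.IsEntry h x a) : θ.1 = θ'.1 := by
  obtain ⟨hstep, hreg, hact⟩ := hθ
  obtain ⟨hstep', hreg', hact'⟩ := hθ'
  exact Prod.ext (Fin.ext (by omega)) (Prod.ext (hreg.symm.trans hreg') (Fin.ext (by omega)))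

/-- The flag is set by the only visit to a location, so only one location can set it. -/
lemma location_eq_of_flag_mode {θ θ' : LockKey k w L r A} {l : List (Obs × Fin A)}
    (hθ : (θ.mode l).flag) (hθ' : (θ'.mode l).flag) : θ.1 = θ'.1 := by
  induction l using List.reverseRecOn with
  | nil => simp [flag] at hθ
  | append_singleton l x ih =>
    have herase := eraseFlag_mode θ θ' l
    rw [mode_concat] at hθ hθ'
    revert ih hθ hθ' herase
    generalize θ.mode l = u
    generalize θ'.mode l = u'
    intro ih hθ hθ' herase
    cases u <;> cases u' <;> simp only [eraseFlag, register.injEq, reduceCtorEq] at herase <;>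
      simp only [LockMode.step] at hθ hθ' <;> (try split_ifs at hθ hθ') <;>
      simp only [flag, Bool.and_eq_true, decide_eq_true_eq, Bool.false_eq_true] at ih hθ hθ' <;>
      grind [IsEntry.location_eq]

lemma password_eq_of_isUnlocked_mode {θ θ' : LockKey k w L r A} {l : List (Obs × Fin A)}
    (hθ : (θ.mode l).isUnlocked) (hθ' : (θ'.mode l).isUnlocked) (i : Fin L)
    (hi : k + w + 1 + i ≤ l.length) : θ.2 i = θ'.2 i := by
  induction l using List.reverseRecOn with
  | nil => simp [isUnlocked] at hθ
  | append_singleton l x ih =>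
    rw [List.length_append, List.length_singleton] at hi
    rw [mode_concat] at hθ hθ'
    revert ih hθ hθ'
    generalize θ.mode l = u
    generalize θ'.mode l = u'
    intro ih hθ hθ'
    have hlate (x : Fin (2 ^ k)) (a) (θ : LockKey k w L r A) : ¬ θ.IsEntry (l.length + 1) x a := by
      rintro ⟨hstep, -, -⟩
      omega
    cases u with
    | coin b =>
      cases u' with
      | coin b' =>
        simp only [LockMode.step] at hθ hθ'
        split_ifs at hθ hθ' with hr
        · simp [isUnlocked] at hθ
        simp only [isUnlocked, Bool.and_eq_true, decide_eq_true_eq] at ih hθ hθ'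
        by_cases hl : k + w + 1 + i ≤ l.length
        · exact ih hθ.1 hθ'.1 hl
        · have hlast : l.length + 1 = k + w + 1 + i := by omega
          exact Subtype.ext ((hθ.2 i hlast).symm.trans (hθ'.2 i hlast))
      | _ => simp only [LockMode.step] at hθ'; try split_ifs at hθ'
             all_goals simp [isUnlocked, hlate] at hθ'
    | _ => simp only [LockMode.step] at hθ; try split_ifs at hθ
           all_goals simp [isUnlocked, hlate] at hθ

lemma card_isUnlocked_mode_le_one {l : List (Obs × Fin A)} (hl : l.length = k + w + L) :
    #{θ : LockKey k w L r A | (θ.mode l).isUnlocked} ≤ 1 := by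
  refine Finset.card_le_one.2 fun θ hθ θ' hθ' => ?_
  simp only [Finset.mem_filter, Finset.mem_univ, true_and] at hθ hθ'
  exact Prod.ext (location_eq_of_flag_mode (flag_of_isUnlocked hθ) (flag_of_isUnlocked hθ'))
    (funext fun i => password_eq_of_isUnlocked_mode hθ hθ' i (by omega))

lemma card_hasRevealedUnlocked_mode_le (θ₀ : LockKey k w L r A) (l : List (Obs × Fin A)) :
    (#{θ : LockKey k w L r A | (θ.mode l).hasRevealedUnlocked} : ℝ) ≤
      if (θ₀.mode l).hasRevealed then
        (Fintype.card (LockKey k w L r A) : ℝ) / Fintype.card (Location k w A) else 0 := by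
  split_ifs with hrev
  · have hloc : (Fintype.card (Location k w A) : ℝ) ≠ 0 := by
      exact_mod_cast (Fintype.card_pos_iff.2 ⟨θ₀.1⟩).ne'
    rw [Fintype.card_prod, Nat.cast_mul, mul_div_cancel_left₀ _ hloc, Nat.cast_le]
    refine Finset.card_le_card_of_injOn Prod.snd (fun _ _ => Finset.mem_univ _) ?_
    intro θ hθ θ' hθ' hpassword
    simp only [Finset.coe_filter, Finset.mem_univ, true_and, Set.mem_ofPred_eq] at hθ hθ'
    exact Prod.ext (location_eq_of_flag_mode (flag_of_hasRevealedUnlocked hθ)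
      (flag_of_hasRevealedUnlocked hθ')) hpassword
  · rw [Finset.filter_false_of_mem fun θ _ hθ => hrev ?_]
    · simp
    · rw [hasRevealed_mode θ₀ θ]
      exact hasRevealed_of_hasRevealedUnlocked hθ

/-- At most one step of an episode has a weight other than `1`: the signal, or the last step. -/
lemma seqProd_stepWeight (θ : LockKey k w L r A) {H : ℕ} (G D : ℝ) {l : List (Obs × Fin A)}
    (hl : l.length < H) (x : Obs × Fin A) :
    seqProd (fun p _ => (θ.mode p).stepWeight H G D (p.length + 1)) (l ++ [x]) =
      (if (θ.mode l).hasRevealedUnlocked then G else 1) *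
        if l.length + 1 = H ∧ (θ.mode l).isUnlocked then D else 1 := by
  induction l using List.reverseRecOn generalizing x with
  | nil =>
    rw [seqProd_concat]
    simp [stepWeight, hasRevealedUnlocked, isUnlocked]
  | append_singleton l y ih =>
    rw [List.length_append, List.length_singleton] at hl
    have hlast : l.length + 1 ≠ H := hl.ne
    rw [seqProd_concat, ih (by omega), mode_concat, List.length_append, List.length_singleton]
    simp only [hlast, false_and, if_false, mul_one]
    cases θ.mode l with
    | register z =>
      simp only [LockMode.step]
      split_ifs <;> simp_all [stepWeight, hasRevealedUnlocked, isUnlocked]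
    | coin b =>
      simp only [LockMode.step]
      split_ifs <;> simp_all [stepWeight, hasRevealedUnlocked, isUnlocked]
    | signal b => cases b <;> simp [LockMode.step, stepWeight, hasRevealedUnlocked, isUnlocked]
    | dead b => cases b <;> simp [LockMode.step, stepWeight, hasRevealedUnlocked, isUnlocked]

end LockKey

end Flags

/-! ### Regret of the combination lock -/

section Regret

variable {S O A : Type} [Fintype S] [Fintype O] [Fintype A] {H : ℕ}

namespace POMDP

lemma trajProb_nonneg (M : POMDP S O A H) (π : Policy O A) (τ : Fin H → O × A) :
    0 ≤ M.trajProb π τ := by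
  refine Finset.sum_nonneg fun s _ => Finset.prod_nonneg fun h _ => ?_
  refine mul_nonneg (mul_nonneg ?_ (M.emit_nonneg _ _ _)) (π.act_nonneg _ _ _)
  split_ifs
  exacts [M.init_nonneg _, M.trans_nonneg _ _ _ _]

variable {M : POMDP S O A H} (hM : ∀ π, ∑ τ, M.trajProb π τ = 1)

include hM

lemma isProbKernel_trajProb (𝔄 : Algorithm O A H) :
    IsProbKernel fun p τ => M.trajProb (𝔄.policyAt p) τ where
  nonneg _ _ := M.trajProb_nonneg _ _
  sum_eq_one _ := hM _

lemma value_le_optValue (π : Policy O A) : M.value π ≤ M.optValue := by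
  refine le_ciSup (f := M.value) ⟨1, ?_⟩ π
  rintro _ ⟨π, rfl⟩
  calc M.value π ≤ ∑ τ, M.trajProb π τ * 1 := Finset.sum_le_sum fun τ _ =>
        mul_le_mul_of_nonneg_left (M.reward_total τ) (M.trajProb_nonneg π τ)
    _ = 1 := by simp only [mul_one, hM]

lemma mul_seqExpect_countP_le_expRegret (F : (Fin H → O × A) → Bool) (c : ℝ)
    (hF : ∀ π, c * ∑ τ, M.trajProb π τ * (if F τ then 1 else 0) ≤ M.optValue - M.value π)
    (𝔄 : Algorithm O A H) (T : ℕ) :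
    c * seqExpect (fun p τ => M.trajProb (𝔄.policyAt p) τ) T (fun l => (l.countP F : ℝ)) ≤
      M.expRegret 𝔄 T := by
  have hregret : M.expRegret 𝔄 T = seqExpect (fun p τ => M.trajProb (𝔄.policyAt p) τ) T
      (seqSum fun p _ => M.optValue - M.value (𝔄.policyAt p)) := by
    unfold POMDP.expRegret POMDP.transcriptProb seqExpect
    refine Finset.sum_congr rfl fun τs _ => ?_
    rw [prod_take_eq_seqProd fun p τ => M.trajProb (𝔄.policyAt p) τ,
      sum_take_eq_seqSum fun p _ => M.optValue - M.value (𝔄.policyAt p)]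
  have hcount (l : List (Fin H → O × A)) :
      c * (l.countP F : ℝ) = seqSum (fun _ τ => c * if F τ then 1 else 0) l := by
    induction l using List.reverseRecOn with
    | nil => simp
    | append_singleton l τ ih =>
      rw [seqSum_concat, ← ih, List.countP_append, List.countP_singleton]
      push_cast
      ring
  rw [hregret, ← seqExpect_const_mul, seqExpect_congr fun l _ => hcount l]
  refine (isProbKernel_trajProb hM 𝔄).seqExpect_seqSum_le (fun p => ?_) T
  rw [← Finset.sum_mul, hM, one_mul]
  simpa only [Finset.mul_sum, mul_left_comm] using hF (𝔄.policyAt p)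

end POMDP

end Regret

section OptimalPlay

variable {k w L r n A : ℕ}

/-- The actions that shift the bits of the hidden register in, leave it at the hidden location, then
wait (with the action `A - 1`, which is not revealing) and enter the password. -/
def LockKey.solution (hA : 3 ≤ A) (θ : LockKey k w L r A) (h : ℕ) : Fin A :=
  if h ≤ k + θ.1.1 then ⟨(θ.1.2.1 / 2 ^ (k + θ.1.1 - h)) % 2, by omega⟩
  else if h = k + θ.1.1 + 1 then ⟨θ.1.2.2 + 2, by omega⟩
  else if hh : k + w + 1 ≤ h ∧ h - (k + w + 1) < L then (θ.2 ⟨h - (k + w + 1), hh.2⟩).1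
  else ⟨A - 1, by omega⟩

lemma LockKey.le_solution (hA : 3 ≤ A) (hr : r < A) (θ : LockKey k w L r A) {h : ℕ}
    (hh : k + θ.1.1 + 1 < h) : r ≤ θ.solution hA h := by
  rw [solution, if_neg (by omega), if_neg (by omega)]
  split_ifs with hpassword
  · exact (θ.2 _).2
  · simp only; omega

lemma LockKey.accepts_solution (hA : 3 ≤ A) (θ : LockKey k w L r A) (h : ℕ) :
    θ.Accepts h (θ.solution hA h) := by
  intro i hi
  have hL : h - (k + w + 1) < L := by omega
  rw [solution, if_neg (by omega), if_neg (by omega), dif_pos ⟨by omega, hL⟩]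
  rw [show (⟨h - (k + w + 1), hL⟩ : Fin L) = i from Fin.ext (by simp only; omega)]

variable {Obs : Type} (eo : Obs ≃ LockObs (Fin (2 ^ k)) n) (v : Fin n → Bool) (σ ε : ℝ)

lemma stateAfter_solution_register (hA : 3 ≤ A) (θ : LockKey k w L r A) {h : ℕ}
    (hh : h ≤ k + θ.1.1) :
    (lockAutomaton eo θ v σ ε).stateAfter (θ.solution hA) h =
      .register ⟨θ.1.2.1 / 2 ^ (k + θ.1.1 - h),
        (Nat.div_le_self _ _).trans_lt θ.1.2.1.2⟩ := by
  induction h with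
  | zero =>
    rw [ActionAutomaton.stateAfter, lockAutomaton, LockMode.register.injEq, Fin.ext_iff]
    exact (Nat.div_eq_of_lt (θ.1.2.1.2.trans_le
      (Nat.pow_le_pow_right (by norm_num) (by omega)))).symm
  | succ h ih =>
    have hbit : θ.solution hA (h + 1) = ⟨(θ.1.2.1 / 2 ^ (k + θ.1.1 - (h + 1))) % 2, by omega⟩ := by
      rw [LockKey.solution, if_pos hh]
    obtain ⟨d, hd⟩ : ∃ d, k + θ.1.1 - (h + 1) = d := ⟨_, rfl⟩
    have hd' : k + θ.1.1 - h = d + 1 := by omega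
    rw [ActionAutomaton.stateAfter, ih (by omega), hbit]
    simp only [lockAutomaton, LockMode.step, if_pos (Nat.mod_lt _ (Nat.zero_lt_two)), shift, hd,
      hd', pow_succ, ← Nat.div_div_eq_div_mul, Nat.div_add_mod, LockMode.register.injEq]
    exact Fin.ext (Nat.mod_eq_of_lt ((Nat.div_le_self _ _).trans_lt θ.1.2.1.2))

lemma stateAfter_solution_coin (hA : 3 ≤ A) (hr : r < A) (θ : LockKey k w L r A) {h : ℕ}
    (hh : k + θ.1.1 + 1 ≤ h) :
    (lockAutomaton eo θ v σ ε).stateAfter (θ.solution hA) h = .coin true := by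
  induction h, hh using Nat.le_induction with
  | base =>
    have hexit : θ.solution hA (k + θ.1.1 + 1) = ⟨θ.1.2.2 + 2, by omega⟩ := by
      rw [LockKey.solution, if_neg (by omega), if_pos rfl]
    have hentry : θ.IsEntry (k + θ.1.1 + 1) θ.1.2.1 ⟨θ.1.2.2 + 2, by omega⟩ :=
      ⟨by omega, rfl, rfl⟩
    rw [ActionAutomaton.stateAfter, stateAfter_solution_register eo v σ ε hA θ le_rfl, hexit]
    simp [lockAutomaton, LockMode.step, hentry]
  | succ h hh ih =>
    rw [ActionAutomaton.stateAfter, ih]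
    simp [lockAutomaton, LockMode.step, (θ.le_solution hA hr (Nat.lt_succ_of_le hh)).not_gt,
      θ.accepts_solution hA]

end OptimalPlay

section LockRegret

variable {k w L r n A : ℕ} {State Obs : Type} [Fintype State] [Fintype Obs]

/-- The mode, relative to the key `θ`, just before the last observation of an episode. -/
def LockKey.finalMode (θ : LockKey k w L r A) (τ : Fin (k + w + L + 1) → Obs × Fin A) :
    LockMode k :=
  θ.mode (List.ofFn τ).dropLast

/-- The expected reward of an episode given its final mode. -/
def LockMode.meanReward (ε : ℝ) : LockMode k → ℝ
  | .coin b => 1 / 2 + flagBias ε b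
  | _ => 0

lemma LockMode.obsLaw_self_success (H : ℕ) (v : Fin n → Bool) (σ ε : ℝ) (u : LockMode k) :
    u.obsLaw H v σ ε H .success = u.meanReward ε := by
  cases u with
  | signal b => simp [meanReward, signalLaw]
  | _ => simp [meanReward, coinLaw]

variable [NeZero n] (e : State ≃ LockState (Fin (2 ^ k)))
  (eo : Obs ≃ LockObs (Fin (2 ^ k)) n) {σ : ℝ}
  (hσ : |σ| ≤ 1) (θ : LockKey k w L r A) (v : Fin n → Bool) {ε : ℝ} (hε : |ε| ≤ 1 / 2)

include hσ hε in
lemma isProbKernel_lockAutomaton_kernel (π : Policy Obs (Fin A)) :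
    IsProbKernel ((lockAutomaton eo θ v σ ε).kernel π) where
  nonneg l x := mul_nonneg (LockMode.obsLaw_nonneg _ v hσ hε _ _ _) (π.act_nonneg _ _ _)
  sum_eq_one l := by
    have hsum := (lockAutomaton eo θ v σ ε).sum_kernel_mul π l fun _ => 1
    simp only [mul_one] at hsum
    rw [hsum, ← LockMode.sum_obsLaw (k + w + L + 1) v σ ε (l.length + 1) (θ.mode l)]
    exact eo.sum_comp (LockMode.obsLaw (k + w + L + 1) v σ ε (l.length + 1) (θ.mode l))

lemma sum_trajProb_combinationLock (π : Policy Obs (Fin A)) :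
    ∑ τ, (combinationLock e eo hσ θ v hε).trajProb π τ = 1 := by
  have hsum := (combinationLock_isFilter e eo hσ v hε (θ := θ) (.inl rfl)).sum_trajProb_mul π
    fun _ => 1
  simpa only [mul_one, seqExpect_one (isProbKernel_lockAutomaton_kernel eo hσ θ v hε π).sum_eq_one]
    using hsum

lemma sum_trajProb_mul_finalMode (π : Policy Obs (Fin A)) (g : LockMode k → ℝ) :
    ∑ τ, (combinationLock e eo hσ θ v hε).trajProb π τ * g (θ.finalMode τ) =
      seqExpect ((lockAutomaton eo θ v σ ε).kernel π) (k + w + L) fun l => g (θ.mode l) := by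
  have hsum := (combinationLock_isFilter e eo hσ v hε (θ := θ) (.inl rfl)).sum_trajProb_mul π
    fun l => g (θ.mode l.dropLast)
  simp only [seqExpect_succ, List.dropLast_concat, ← Finset.sum_mul,
    (isProbKernel_lockAutomaton_kernel eo hσ θ v hε π).sum_eq_one, one_mul] at hsum
  exact hsum

lemma value_combinationLock (π : Policy Obs (Fin A)) :
    (combinationLock e eo hσ θ v hε).value π =
      seqExpect ((lockAutomaton eo θ v σ ε).kernel π) (k + w + L)
        fun l => (θ.mode l).meanReward ε := by
  let success : Obs → ℝ := fun o => if eo o = .success then 1 else 0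
  have hreward (τ : Fin (k + w + L + 1) → Obs × Fin A) :
      ∑ h, (combinationLock e eo hσ θ v hε).reward (h.1 + 1) (τ h).1 (τ h).2 =
        ((List.ofFn τ).getLast?.map fun x => success x.1).getD 0 := by
    simp only [combinationLock]
    rw [Fin.sum_univ_castSucc, Finset.sum_eq_zero fun i _ => if_neg (by simp; omega), zero_add,
      ofFn_eq_castSucc_concat]
    simp [success]
  have hsum := (combinationLock_isFilter e eo hσ v hε (θ := θ) (.inl rfl)).sum_trajProb_mul π
    fun l => (l.getLast?.map fun x => success x.1).getD 0
  simp only [POMDP.value, hreward]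
  rw [hsum, seqExpect_succ]
  refine seqExpect_congr fun l hl => ?_
  simp only [List.getLast?_concat, Option.map_some, Option.getD_some]
  rw [ActionAutomaton.sum_kernel_mul _ π l success, run_lockAutomaton, hl,
    ← LockMode.obsLaw_self_success (k + w + L + 1) v σ]
  refine (eo.sum_comp fun o => (θ.mode l).obsLaw _ v σ ε _ o * if o = .success then 1 else 0).trans
    ?_
  simp

lemma add_le_optValue_combinationLock (hA : 3 ≤ A) (hr : r < A) :
    1 / 2 + ε ≤ (combinationLock e eo hσ θ v hε).optValue := by
  refine le_trans (le_of_eq ?_) (POMDP.value_le_optValue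
    (sum_trajProb_combinationLock e eo hσ θ v hε) (openLoop (θ.solution hA)))
  have hopen := (lockAutomaton eo θ v σ ε).seqExpect_openLoop
    (fun h u => (eo.sum_comp (u.obsLaw _ v σ ε h)).trans (LockMode.sum_obsLaw _ v σ ε h u))
    (θ.solution hA) (k + w + L) (LockMode.meanReward ε)
  rw [stateAfter_solution_coin eo v σ ε hA hr θ (by omega)] at hopen
  rw [value_combinationLock]
  exact hopen.symm

lemma mul_seqExpect_countP_finalMode_le_expRegret (hA : 3 ≤ A) (hr : r < A)
    {F : LockMode k → Bool} {c : ℝ}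
    (hF : ∀ u, u.meanReward ε + c * (if F u then 1 else 0) ≤ 1 / 2 + ε)
    (𝔄 : Algorithm Obs (Fin A) (k + w + L + 1)) (T : ℕ) :
    c * seqExpect (fun p τ => (combinationLock e eo hσ θ v hε).trajProb (𝔄.policyAt p) τ) T
        (fun l => (l.countP fun τ => F (θ.finalMode τ) : ℝ)) ≤
      (combinationLock e eo hσ θ v hε).expRegret 𝔄 T := by
  refine POMDP.mul_seqExpect_countP_le_expRegret (sum_trajProb_combinationLock e eo hσ θ v hε)
    _ c (fun π => ?_) 𝔄 T
  have hmean : (combinationLock e eo hσ θ v hε).value π +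
      c * ∑ τ, (combinationLock e eo hσ θ v hε).trajProb π τ *
        (if F (θ.finalMode τ) then 1 else 0) ≤ 1 / 2 + ε := by
    have hkernel := isProbKernel_lockAutomaton_kernel eo hσ θ v hε π
    rw [value_combinationLock,
      sum_trajProb_mul_finalMode e eo hσ θ v hε π fun u => if F u then 1 else 0,
      ← seqExpect_const_mul, ← seqExpect_add,
      ← seqExpect_const hkernel.sum_eq_one (k + w + L) (1 / 2 + ε)]
    exact seqExpect_mono hkernel.nonneg fun l _ => hF _
  linarith [add_le_optValue_combinationLock e eo hσ θ v hε hA hr]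

end LockRegret

section LockAlternatives

variable {k w L r n A : ℕ} {State Obs : Type} [Fintype State] [Fintype Obs]

/-- The likelihood ratio of an episode of the combination lock with key `θ`, secret `v` and bias `ε`
against the null instance. It does not involve the policy. -/
def LockKey.likelihoodRatio (eo : Obs ≃ LockObs (Fin (2 ^ k)) n) (σ ε : ℝ) (θ : LockKey k w L r A)
    (v : Fin n → Bool) (τ : Fin (k + w + L + 1) → Obs × Fin A) : ℝ :=
  seqProd (fun p x => (θ.mode p).likelihoodRatio (k + w + L + 1) v σ ε (p.length + 1) (eo x.1))
    (List.ofFn τ)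

variable [NeZero n] (e : State ≃ LockState (Fin (2 ^ k)))
  (eo : Obs ≃ LockObs (Fin (2 ^ k)) n) {σ : ℝ}
  (hσ : |σ| ≤ 1) (θ₀ θ : LockKey k w L r A) (v v₀ : Fin n → Bool)

/-- The null instance: no location carries a bias. The key `θ₀` and the secret `v₀` do not affect
its trajectory laws. -/
def nullLock : POMDP State Obs (Fin A) (k + w + L + 1) :=
  combinationLock e eo hσ θ₀ v₀ (ε := 0) (by norm_num)

lemma trajProb_nullLock (π : Policy Obs (Fin A)) (τ : Fin (k + w + L + 1) → Obs × Fin A) :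
    (nullLock e eo hσ θ₀ v₀).trajProb π τ =
      seqProd ((lockAutomaton eo θ v₀ σ 0).kernel π) (List.ofFn τ) :=
  (combinationLock_isFilter e eo hσ v₀ _ (.inr rfl)).trajProb_eq_seqProd π τ

variable {ε : ℝ} (hε : |ε| ≤ 1 / 2)

lemma trajProb_nullLock_mul_likelihoodRatio (π : Policy Obs (Fin A))
    (τ : Fin (k + w + L + 1) → Obs × Fin A) :
    (nullLock e eo hσ θ₀ v₀).trajProb π τ * θ.likelihoodRatio eo σ ε v τ =
      (combinationLock e eo hσ θ v hε).trajProb π τ := by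
  have hstep : (fun p x => (lockAutomaton eo θ v₀ σ 0).kernel π p x *
      (θ.mode p).likelihoodRatio (k + w + L + 1) v σ ε (p.length + 1) (eo x.1)) =
      (lockAutomaton eo θ v σ ε).kernel π := by
    funext p x
    simp only [ActionAutomaton.kernel, run_lockAutomaton]
    rw [mul_right_comm]
    exact congrArg (· * _) (LockMode.obsLaw_mul_likelihoodRatio _ v v₀ σ ε _ _ _)
  rw [trajProb_nullLock e eo hσ θ₀ θ, LockKey.likelihoodRatio, ← seqProd_mul, hstep]
  exact ((combinationLock_isFilter e eo hσ v hε (.inl rfl)).trajProb_eq_seqProd π τ).symm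

include hε

lemma sum_nullLock_trajProb_mul_likelihoodRatio_mul_le (v' : Fin n → Bool)
    (π : Policy Obs (Fin A)) :
    ∑ τ, (nullLock e eo hσ θ₀ v₀).trajProb π τ *
      (θ.likelihoodRatio eo σ ε v τ * θ.likelihoodRatio eo σ ε v' τ /
        flagWeight (fun τ => (θ.finalMode τ).hasRevealedUnlocked)
          (fun τ => (θ.finalMode τ).isUnlocked)
          (signalCrossBound ((2 * ε * σ) ^ 2) v v') (1 + 4 * ε ^ 2) τ) ≤ 1 := by
  set H := k + w + L + 1 with hH
  set G := signalCrossBound ((2 * ε * σ) ^ 2) v v'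
  set D := 1 + 4 * ε ^ 2
  let ratio (v : Fin n → Bool) (p : List (Obs × Fin A)) (o : LockObs (Fin (2 ^ k)) n) : ℝ :=
    (θ.mode p).likelihoodRatio H v σ ε (p.length + 1) o
  let weight (p : List (Obs × Fin A)) : ℝ := (θ.mode p).stepWeight H G D (p.length + 1)
  have hweight (p) : 0 < weight p :=
    LockMode.stepWeight_pos _ _ (zero_lt_one.trans_le (one_le_signalCrossBound _ _ _))
      (by positivity) _
  have hepisode (τ : Fin H → Obs × Fin A) :
      θ.likelihoodRatio eo σ ε v τ * θ.likelihoodRatio eo σ ε v' τ /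
        flagWeight (fun τ => (θ.finalMode τ).hasRevealedUnlocked)
          (fun τ => (θ.finalMode τ).isUnlocked) G D τ =
      seqProd (fun p x => ratio v p (eo x.1) * ratio v' p (eo x.1) * (weight p)⁻¹)
        (List.ofFn τ) := by
    have hflag : flagWeight (fun τ => (θ.finalMode τ).hasRevealedUnlocked)
        (fun τ => (θ.finalMode τ).isUnlocked) G D τ =
        seqProd (fun p _ => weight p) (List.ofFn τ) := by
      rw [flagWeight, LockKey.finalMode, ofFn_eq_castSucc_concat, List.dropLast_concat,
        θ.seqProd_stepWeight G D (by simp [hH])]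
      simp [hH]
    rw [seqProd_mul, seqProd_mul, seqProd_inv, hflag, div_eq_mul_inv]
    rfl
  simp only [hepisode, trajProb_nullLock e eo hσ θ₀ θ]
  refine seqExpect_seqProd_le_one
    (isProbKernel_lockAutomaton_kernel eo hσ θ v₀ (by norm_num) π).nonneg (fun p x => ?_)
    (fun p => ?_) H
  · exact mul_nonneg (mul_nonneg (LockMode.likelihoodRatio_nonneg _ v _ hσ hε _ _)
      (LockMode.likelihoodRatio_nonneg _ v' _ hσ hε _ _)) (inv_nonneg.2 (hweight p).le)
  · have hcross := LockMode.sum_obsLaw_mul_likelihoodRatio_mul_le H v v' v₀ σ ε (p.length + 1)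
      (θ.mode p)
    rw [← eo.sum_comp, ← div_le_one (hweight p), Finset.sum_div] at hcross
    rw [(lockAutomaton eo θ v₀ σ 0).sum_kernel_mul π p fun o =>
      ratio v p (eo o) * ratio v' p (eo o) * (weight p)⁻¹]
    simp only [div_eq_mul_inv, mul_assoc] at hcross ⊢
    exact hcross

lemma crossMomentBound_lock (𝔄 : Algorithm Obs (Fin A) (k + w + L + 1)) :
    CrossMomentBound (fun p τ => (nullLock e eo hσ θ₀ v₀).trajProb (𝔄.policyAt p) τ)
      (θ.likelihoodRatio eo σ ε) (fun τ => (θ.finalMode τ).hasRevealedUnlocked)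
      (fun τ => (θ.finalMode τ).isUnlocked) (signalCrossBound ((2 * ε * σ) ^ 2))
      (1 + 4 * ε ^ 2) where
  nonneg v τ := seqProd_nonneg (fun _ _ => LockMode.likelihoodRatio_nonneg _ v _ hσ hε _ _) _
  mean_eq_one v p := by
    simp only [trajProb_nullLock_mul_likelihoodRatio e eo hσ θ₀ θ v v₀ hε]
    exact sum_trajProb_combinationLock e eo hσ θ v hε _
  one_le_corr v v' := one_le_signalCrossBound _ v v'
  one_le_flag := by nlinarith [sq_nonneg ε]
  cross_le v v' p :=
    sum_nullLock_trajProb_mul_likelihoodRatio_mul_le e eo hσ θ₀ θ v v₀ hε v' (𝔄.policyAt p)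

theorem le_expRegret_null_or_exists_le (hA : 3 ≤ A) (hr : r < A) (hε₀ : 0 ≤ ε) {n₁ n₂ : ℕ}
    (hn₁ : 0 < n₁) (hn₂ : 0 < n₂)
    (hχ : ∑ v : Fin n → Bool, ∑ v',
      signalCrossBound ((2 * ε * σ) ^ 2) v v' ^ n₁ * (1 + 4 * ε ^ 2) ^ n₂ ≤
        (1 + 1 / 16) * (Fintype.card (Fin n → Bool) : ℝ) ^ 2)
    {T : ℕ} (hΘ : 8 ≤ Fintype.card (LockKey k w L r A))
    (hΘT : 8 * (T : ℝ) ≤ Fintype.card (LockKey k w L r A) * n₂) {B : ℝ}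
    (hB₁ : B ≤ Fintype.card (Location k w A) * n₁ / 16) (hB₂ : B ≤ 3 / 8 * ε * T)
    (𝔄 : Algorithm Obs (Fin A) (k + w + L + 1)) :
    B ≤ (nullLock e eo hσ θ₀ v₀).expRegret 𝔄 T ∨
      ∃ (θ : LockKey k w L r A) (v : Fin n → Bool),
        B ≤ (combinationLock e eo hσ θ v hε).expRegret 𝔄 T := by
  have hloc : (0 : ℝ) < Fintype.card (Location k w A) := by
    exact_mod_cast Fintype.card_pos_iff.2 ⟨θ₀.1⟩
  refine le_null_or_exists_alternative_le
    (K := fun p τ => (nullLock e eo hσ θ₀ v₀).trajProb (𝔄.policyAt p) τ)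
    (POMDP.isProbKernel_trajProb (sum_trajProb_combinationLock e eo hσ θ₀ v₀ _) 𝔄)
    (fun θ => crossMomentBound_lock e eo hσ θ₀ θ v₀ hε 𝔄) hn₁ hn₂ hχ hloc
    (rev := fun τ => (θ₀.finalMode τ).hasRevealed)
    (fun τ => θ₀.card_hasRevealedUnlocked_mode_le _)
    (fun τ => LockKey.card_isUnlocked_mode_le_one (by simp)) hΘ hΘT hε₀ hB₁ hB₂ ?_
    fun θ v => ?_
  · refine mul_seqExpect_countP_finalMode_le_expRegret e eo hσ θ₀ v₀ _ hA hr (fun u => ?_) 𝔄 T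
    cases u <;> norm_num [LockMode.meanReward, LockMode.hasRevealed]
  · have hmiss := mul_seqExpect_countP_finalMode_le_expRegret e eo hσ θ v hε hA hr
      (F := fun u => !u.isUnlocked) (c := ε) (fun u => ?_) 𝔄 T
    · simp only [trajProb_nullLock_mul_likelihoodRatio e eo hσ θ₀ θ v v₀ hε]
      refine le_trans (le_of_eq (congrArg (ε * ·) (seqExpect_congr fun l hl => ?_))) hmiss
      rw [← hl, List.length_eq_countP_add_countP fun τ => (θ.finalMode τ).isUnlocked]
      push_cast
      simp
    · cases u with
      | coin b => cases b <;> simp [LockMode.meanReward, LockMode.isUnlocked, flagBias]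
      | _ => simp [LockMode.meanReward, LockMode.isUnlocked]

end LockAlternatives

/-! ### The χ² bound for random signs -/

section ChiSquare

variable {n : ℕ}

lemma exp_max_zero_mul_le {β x : ℝ} (hβ₀ : 0 ≤ β) (hβ₁ : β ≤ 1) :
    Real.exp (max 0 (β * x)) ≤ 1 + β * (Real.exp x + Real.exp (-x)) := by
  have hneg : 0 ≤ β * Real.exp (-x) := mul_nonneg hβ₀ (Real.exp_pos _).le
  have hpos : 0 ≤ β * Real.exp x := mul_nonneg hβ₀ (Real.exp_pos _).le
  rcases le_total 0 (β * x) with h | h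
  · have hconvex := convexOn_exp.2 (Set.mem_univ x) (Set.mem_univ 0) hβ₀ (sub_nonneg.2 hβ₁)
      (add_sub_cancel _ _)
    simp only [smul_eq_mul, mul_zero, add_zero, Real.exp_zero, mul_one] at hconvex
    rw [max_eq_right h]
    linarith
  · rw [max_eq_left h, Real.exp_zero]
    linarith

lemma sum_exp_mul_signCorr (v : Fin n → Bool) (t : ℝ) :
    ∑ v' : Fin n → Bool, Real.exp (t * signCorr v v') = (2 * Real.cosh t) ^ n := by
  have hcoord (i : Fin n) :
      ∑ b, Real.exp (t * (boolSign (v i) * boolSign b)) = 2 * Real.cosh t := by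
    rw [Real.cosh_eq, Fintype.sum_bool]
    cases v i <;> simp <;> ring
  simp only [signCorr, mul_sum, Real.exp_sum]
  rw [← Fintype.prod_sum fun i b => Real.exp (t * (boolSign (v i) * boolSign b)),
    prod_congr rfl fun i _ => hcoord i, prod_const, card_univ, Fintype.card_fin]

lemma sum_exp_mul_signCorr_le (v : Fin n → Bool) {t : ℝ} (ht : t ^ 2 * n ≤ 1) :
    ∑ v' : Fin n → Bool, Real.exp (t * signCorr v v') ≤ 2 * 2 ^ n := by
  have hcosh : Real.cosh t ^ n ≤ Real.exp (1 / 2) := by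
    calc Real.cosh t ^ n ≤ Real.exp (t ^ 2 / 2) ^ n :=
          pow_le_pow_left₀ (Real.cosh_pos t).le (Real.cosh_le_exp_half_sq t) n
      _ = Real.exp (n * (t ^ 2 / 2)) := (Real.exp_nat_mul _ _).symm
      _ ≤ Real.exp (1 / 2) := Real.exp_le_exp.2 (by linarith)
  have htwo : Real.exp (1 / 2) ≤ 2 := by
    have hsq : Real.exp (1 / 2) * Real.exp (1 / 2) = Real.exp 1 := by
      rw [← Real.exp_add]; norm_num
    nlinarith [Real.exp_one_lt_d9, Real.exp_pos (1 / 2)]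
  rw [sum_exp_mul_signCorr, mul_pow, mul_comm]
  gcongr
  exact hcosh.trans htwo

lemma one_add_pow_le_exp {x : ℝ} (hx : 0 ≤ x) (m : ℕ) : (1 + x) ^ m ≤ Real.exp (m * x) := by
  rw [Real.exp_nat_mul]
  gcongr
  linarith [Real.add_one_le_exp x]

lemma signalCrossBound_pow_le (v v' : Fin n → Bool) {c : ℝ} (hc : 0 ≤ c) {m : ℕ}
    (hm : m * c ≤ √n) :
    signalCrossBound c v v' ^ m ≤ 1 + m * c / √n *
      (Real.exp (1 / √n * signCorr v v') + Real.exp (-(1 / √n) * signCorr v v')) := by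
  calc signalCrossBound c v v' ^ m
      ≤ Real.exp (m * max 0 (c * (signCorr v v' / n))) :=
        one_add_pow_le_exp (le_max_left 0 _) m
    _ = Real.exp (max 0 (m * c / √n * (1 / √n * signCorr v v'))) := by
        rw [mul_max_of_nonneg _ _ m.cast_nonneg, mul_zero]
        congr 2
        rw [← mul_assoc (m * c / √n), div_mul_div_comm, Real.mul_self_sqrt n.cast_nonneg]
        ring
    _ ≤ _ := by
        rw [neg_mul]
        exact exp_max_zero_mul_le (by positivity) (div_le_one_of_le₀ hm (Real.sqrt_nonneg _))

lemma sum_signalCrossBound_pow_le (v : Fin n → Bool) {c : ℝ} (hc : 0 ≤ c) {m : ℕ}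
    (hm : m * c ≤ √n) :
    ∑ v', signalCrossBound c v v' ^ m ≤ (1 + 4 * (m * c / √n)) * 2 ^ n := by
  have hscale : (1 / √n) ^ 2 * n ≤ 1 := by
    rw [div_pow, Real.sq_sqrt n.cast_nonneg, one_pow, one_div_mul_eq_div]
    exact div_self_le_one _
  have hpos := sum_exp_mul_signCorr_le v hscale
  have hneg := sum_exp_mul_signCorr_le v ((neg_sq (1 / √n)).symm ▸ hscale)
  calc ∑ v', signalCrossBound c v v' ^ m
      ≤ ∑ v', (1 + m * c / √n *
          (Real.exp (1 / √n * signCorr v v') + Real.exp (-(1 / √n) * signCorr v v'))) :=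
        sum_le_sum fun v' _ => signalCrossBound_pow_le v v' hc hm
    _ = 2 ^ n + m * c / √n * (∑ v', Real.exp (1 / √n * signCorr v v') +
          ∑ v', Real.exp (-(1 / √n) * signCorr v v')) := by
        rw [sum_add_distrib, ← mul_sum, sum_add_distrib]
        simp
    _ ≤ 2 ^ n + m * c / √n * (2 * 2 ^ n + 2 * 2 ^ n) := by gcongr
    _ = (1 + 4 * (m * c / √n)) * 2 ^ n := by ring

/-- Since `signCorr v v'` is typically of order `√n`, the mixture over `v` stays close to the null
for `n₁` up to a small multiple of `√n / c`. -/
lemma sum_sum_signalCrossBound_pow_mul_le {c ε : ℝ} (hc : 0 ≤ c) {n₁ n₂ : ℕ}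
    (hn₁ : n₁ * c ≤ √n / 100) (hn₂ : 4 * ε ^ 2 * n₂ ≤ 1 / 50) :
    ∑ v : Fin n → Bool, ∑ v', signalCrossBound c v v' ^ n₁ * (1 + 4 * ε ^ 2) ^ n₂ ≤
      (1 + 1 / 16) * (Fintype.card (Fin n → Bool) : ℝ) ^ 2 := by
  have hβ : n₁ * c / √n ≤ 1 / 100 :=
    div_le_of_le_mul₀ (Real.sqrt_nonneg _) (by norm_num) (by linarith)
  have hfinish : (1 + 4 * ε ^ 2) ^ n₂ ≤ 50 / 49 := by
    have hexp : Real.exp (1 / 50) ≤ 50 / 49 := by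
      have := Real.exp_bound_div_one_sub_of_interval (x := 1 / 50) (by norm_num) (by norm_num)
      norm_num at this ⊢
      exact this
    exact (one_add_pow_le_exp (by positivity) n₂).trans
      ((Real.exp_le_exp.2 (by linarith)).trans hexp)
  have hinner (v : Fin n → Bool) :
      ∑ v', signalCrossBound c v v' ^ n₁ * (1 + 4 * ε ^ 2) ^ n₂ ≤ (1 + 1 / 16) * 2 ^ n := by
    calc _ = (∑ v', signalCrossBound c v v' ^ n₁) * (1 + 4 * ε ^ 2) ^ n₂ := (sum_mul ..).symm
      _ ≤ (1 + 4 * (1 / 100)) * 2 ^ n * (50 / 49) := by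
          gcongr
          refine (sum_signalCrossBound_pow_le v hc (by linarith [Real.sqrt_nonneg n])).trans ?_
          gcongr
      _ ≤ (1 + 1 / 16) * 2 ^ n := by linarith [pow_pos (zero_lt_two (α := ℝ)) n]
  calc _ ≤ ∑ _v : Fin n → Bool, (1 + 1 / 16 : ℝ) * 2 ^ n := sum_le_sum fun v _ => hinner v
    _ = _ := by simp; ring

end ChiSquare

/-! ### Unbiased decoding and the revealing property -/

lemma sum_fin_cons {O : Type*} [Fintype O] (m : ℕ) (f : O → (Fin m → O) → ℝ) :
    ∑ ω : Fin (m + 1) → O, f (ω 0) (fun i => ω i.succ) = ∑ o, ∑ ω, f o ω := by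
  rw [← (Fin.consEquiv fun _ : Fin (m + 1) => O).sum_comp, Fintype.sum_prod_type]
  simp [Fin.consEquiv]

namespace POMDP

variable {S O A : Type} [Fintype S] [Fintype O] [Fintype A] {H : ℕ}

lemma sum_emitActProb_mul_zero (M : POMDP S O A H) (m h : ℕ) (s : S) (a : Fin m → A) (f : O → ℝ) :
    ∑ ω : Fin (m + 1) → O, M.emitActProb (m + 1) h s ω a * f (ω 0) = ∑ o, M.emit h s o * f o := by
  induction m generalizing h s f with
  | zero =>
    exact (sum_fin_cons 0 fun o (_ : Fin 0 → O) => M.emit h s o * f o).trans (by simp)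
  | succ m ih =>
    have hone (s' : S) : ∑ ω : Fin (m + 1) → O,
        M.emitActProb (m + 1) (h + 1) s' ω (fun i => a i.succ) = 1 := by
      simpa [M.emit_sum] using ih (h + 1) s' (fun i => a i.succ) fun _ => 1
    refine (sum_fin_cons (m + 1) fun o ω => M.emit h s o * (∑ s', M.trans h s (a 0) s' *
      M.emitActProb (m + 1) (h + 1) s' ω fun i => a i.succ) * f o).trans ?_
    refine sum_congr rfl fun o _ => ?_
    rw [← sum_mul, ← mul_sum, sum_comm]
    simp only [← mul_sum, hone, mul_one, M.trans_sum]

/-- The action played at the first step of a window of length `m + 2`; a definition because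
`Fin (m + 2 - 1)` has no numeral `0`. -/
def firstAction {A : Type} {m : ℕ} (a : Fin (m + 2 - 1) → A) : A := a ⟨0, Nat.succ_pos m⟩

lemma sum_emitActProb_mul_zero_one (M : POMDP S O A H) (m h : ℕ) (s : S)
    (a : Fin (m + 2 - 1) → A) (f : O → O → ℝ) :
    ∑ ω : Fin (m + 2) → O, M.emitActProb (m + 2) h s ω a * f (ω 0) (ω 1) =
      ∑ o, M.emit h s o * ∑ s', M.trans h s (firstAction a) s' *
        ∑ o', M.emit (h + 1) s' o' * f o o' := by
  refine (sum_fin_cons (m + 1) fun o ω => M.emit h s o * (∑ s', M.trans h s (firstAction a) s' *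
    M.emitActProb (m + 1) (h + 1) s' ω fun i => a i.succ) * f o (ω 0)).trans ?_
  refine sum_congr rfl fun o _ => ?_
  simp only [mul_assoc, ← mul_sum, sum_mul]
  rw [sum_comm]
  simp only [← mul_sum, sum_emitActProb_mul_zero]

end POMDP

/-- Cauchy–Schwarz over the second coordinate, after bounding each column of `B` in `ℓ¹`. -/
lemma opNormStarOne_le_of_column_le {S ι κ : Type} [Fintype S] [Fintype ι] [Fintype κ]
    {B : Matrix S (ι × κ) ℝ} {w : κ → ℝ} {C : ℝ} (hB : ∀ p, ∑ s, |B s p| ≤ w p.2)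
    (hC : √(∑ a, w a ^ 2) ≤ C) : opNormStarOne B ≤ C := by
  refine csSup_le ⟨_, 0, by simp [starNorm], rfl⟩ ?_
  rintro y ⟨x, hx, rfl⟩
  calc ∑ s, |B.mulVec x s| ≤ ∑ s, ∑ p, |B s p| * |x p| :=
        sum_le_sum fun s _ =>
          (abs_sum_le_sum_abs (fun p => B s p * x p) univ).trans_eq (by simp only [abs_mul])
    _ = ∑ p, (∑ s, |B s p|) * |x p| := by simp only [sum_mul]; exact sum_comm
    _ ≤ ∑ p : ι × κ, w p.2 * |x p| :=
        sum_le_sum fun p _ => mul_le_mul_of_nonneg_right (hB p) (abs_nonneg _)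
    _ = ∑ a, w a * ∑ ω, |x (ω, a)| := by
        rw [Fintype.sum_prod_type, sum_comm]; simp only [mul_sum]
    _ ≤ √(∑ a, w a ^ 2) * √(∑ a, (∑ ω, |x (ω, a)|) ^ 2) := Real.sum_mul_le_sqrt_mul_sqrt _ _ _
    _ ≤ √(∑ a, w a ^ 2) * 1 := by gcongr; exact hx
    _ ≤ C := by rwa [mul_one]

namespace POMDP

variable {S O A : Type} [Fintype S] [Fintype O] [Fintype A] {H : ℕ}

lemma sum_ite_firstAction_mem [DecidableEq A] (m : ℕ) (R : Finset A) (c : ℝ) :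
    ∑ a : Fin (m + 2 - 1) → A, (if firstAction a ∈ R then c else 0) =
      #R * (Fintype.card A : ℝ) ^ m * c := by
  refine (sum_fin_cons m fun b (_ : Fin m → A) => if b ∈ R then c else 0).trans ?_
  simp
  ring

open Classical in
/-- The average of the decoder `d`, applied to the first two observations, over the action
sequences that begin in `R`. -/
def averagedDecoder (m : ℕ) (R : Finset A) (d : S → O → O → ℝ) :
    Matrix S ((Fin (m + 2) → O) × (Fin (m + 2 - 1) → A)) ℝ :=
  Matrix.of fun s p =>
    if firstAction p.2 ∈ R then (#R * (Fintype.card A : ℝ) ^ m)⁻¹ * d s (p.1 0) (p.1 1) else 0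

lemma averagedDecoder_mul_emitActMatrix [DecidableEq S] (M : POMDP S O A H) {m h : ℕ}
    {R : Finset A} (hR : R.Nonempty) {d : S → O → O → ℝ}
    (hd : ∀ a ∈ R, ∀ s t, ∑ o, M.emit h t o * ∑ s', M.trans h t a s' *
      ∑ o', M.emit (h + 1) s' o' * d s o o' = if s = t then 1 else 0) :
    averagedDecoder m R d * M.emitActMatrix h (m + 2) = 1 := by
  classical
  have : Nonempty A := hR.to_type
  have hN : #R * (Fintype.card A : ℝ) ^ m ≠ 0 := by
    have := hR.card_ne_zero; have := Fintype.card_ne_zero (α := A); positivity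
  ext s t
  have hsequence (a : Fin (m + 2 - 1) → A) :
      ∑ ω, averagedDecoder m R d s (ω, a) * M.emitActMatrix h (m + 2) (ω, a) t =
        if firstAction a ∈ R then
          (#R * (Fintype.card A : ℝ) ^ m)⁻¹ * (if s = t then 1 else 0) else 0 := by
    by_cases ha : firstAction a ∈ R
    · simp only [averagedDecoder, emitActMatrix, Matrix.of_apply, ha, if_true, mul_assoc, ← mul_sum]
      rw [← hd _ ha, ← sum_emitActProb_mul_zero_one M m h t a]
      simp only [mul_comm (d s _ _)]
    · simp only [averagedDecoder, Matrix.of_apply, ha, if_false, zero_mul, sum_const_zero]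
  rw [Matrix.mul_apply, Fintype.sum_prod_type_right]
  simp only [hsequence]
  rw [sum_ite_firstAction_mem, mul_inv_cancel_left₀ hN, Matrix.one_apply]

lemma opNormStarOne_averagedDecoder_le {m : ℕ} {R : Finset A} {d : S → O → O → ℝ} {C : ℝ}
    (hC₀ : 0 ≤ C) (hC : ∀ o o', ∑ s, |d s o o'| ≤ C) :
    opNormStarOne (averagedDecoder m R d) ≤ C / √(#R * (Fintype.card A : ℝ) ^ m) := by
  classical
  set N : ℝ := #R * (Fintype.card A : ℝ) ^ m with hN
  have hN₀ : 0 ≤ N := by positivity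
  refine opNormStarOne_le_of_column_le
    (w := fun a => if firstAction a ∈ R then N⁻¹ * C else 0) ?_ ?_
  · rintro ⟨ω, a⟩
    by_cases ha : firstAction a ∈ R
    · simp only [averagedDecoder, Matrix.of_apply, ha, if_true, abs_mul, ← mul_sum, ← hN,
        abs_of_nonneg (inv_nonneg.2 hN₀)]
      gcongr
      exact hC _ _
    · simp only [averagedDecoder, Matrix.of_apply, ha, if_false, abs_zero, sum_const_zero, le_refl]
  · simp only [ite_pow, ne_eq, OfNat.ofNat_ne_zero, not_false_eq_true, zero_pow]
    rw [sum_ite_firstAction_mem, ← hN, mul_pow, ← mul_assoc, Real.sqrt_mul' _ (sq_nonneg C),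
      Real.sqrt_sq hC₀, inv_pow, sq, mul_inv, ← mul_assoc]
    rcases hN₀.eq_or_lt with h | h
    · simp [← h]
    · rw [mul_inv_cancel₀ h.ne', one_mul, Real.sqrt_inv, mul_comm, div_eq_mul_inv]

lemma isRevealing_of_decoder [DecidableEq S] (M : POMDP S O A H) {m : ℕ} {R : Finset A}
    (hR : R.Nonempty) {d : S → O → O → ℝ} {C α : ℝ} (hα : 0 < α) (hC₀ : 0 ≤ C)
    (hd : ∀ h ∈ Icc 1 (H - (m + 2) + 1), ∀ a ∈ R, ∀ s t, ∑ o, M.emit h t o *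
      ∑ s', M.trans h t a s' * ∑ o', M.emit (h + 1) s' o' * d s o o' = if s = t then 1 else 0)
    (hC : ∀ o o', ∑ s, |d s o o'| ≤ C) (hCα : C * α ≤ √(#R * (Fintype.card A : ℝ) ^ m)) :
    M.IsRevealing (m + 2) α := by
  classical
  have : Nonempty A := hR.to_type
  have hN : 0 < √(#R * (Fintype.card A : ℝ) ^ m) := by
    have := hR.card_pos; have := Fintype.card_pos (α := A); positivity
  refine fun h hh => ⟨averagedDecoder m R d, fun c _ => ?_, ?_⟩
  · rw [averagedDecoder_mul_emitActMatrix M hR fun a ha s t => ?_, Matrix.one_mulVec]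
    convert hd h hh a ha s t
  · exact (opNormStarOne_averagedDecoder_le hC₀ hC).trans
      ((div_le_div_iff₀ hN hα).2 (by rwa [one_mul]))

end POMDP

section LockDecoder

variable {X : Type} {n : ℕ}

/-- An estimator of whether the signal state is `b`, from a signal of correlation `±σ`. -/
def signalDecoder (v : Fin n → Bool) (σ : ℝ) (b : Bool) : LockObs X n → ℝ
  | .signal i d => 1 / 2 + boolSign b * (boolSign d * boolSign (v i)) / (2 * σ)
  | _ => 0

lemma sum_signalLaw_mul_signalDecoder [Fintype X] [NeZero n] (v : Fin n → Bool) {σ : ℝ}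
    (hσ : σ ≠ 0) (b c : Bool) :
    ∑ o : LockObs X n, signalLaw v (boolSign c * σ) o * signalDecoder v σ b o =
      if b = c then 1 else 0 := by
  have hn : (n : ℝ) ≠ 0 := NeZero.ne _
  have hcoord (i : Fin n) : ∑ d, (1 + boolSign c * σ * (boolSign d * boolSign (v i))) / (2 * n) *
      signalDecoder (X := X) v σ b (.signal i d) = (if b = c then 1 else 0) / n := by
    simp only [signalDecoder, Fintype.sum_bool]
    cases b <;> cases c <;> cases v i <;> simp <;> field_simp <;> ring
  rw [sum_signalLaw_mul, sum_congr rfl fun i _ => hcoord i]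
  simp [mul_div_cancel₀, hn]

lemma abs_half_add_add_abs_half_sub_le {x y : ℝ} (hy : 1 ≤ y) (hx : |x| ≤ y / 2) :
    |1 / 2 + x| + |1 / 2 - x| ≤ y := by
  obtain ⟨hl, hr⟩ := abs_le.1 hx
  rcases abs_cases (1 / 2 + x) with ⟨h₁, _⟩ | ⟨h₁, _⟩ <;>
    rcases abs_cases (1 / 2 - x) with ⟨h₂, _⟩ | ⟨h₂, _⟩ <;> linarith

lemma sum_abs_signalDecoder_le (v : Fin n → Bool) {σ : ℝ} (hσ₀ : 0 < σ) (hσ₁ : σ ≤ 1)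
    (o : LockObs X n) : ∑ b, |signalDecoder v σ b o| ≤ 1 / σ := by
  cases o with
  | signal i d =>
    have habs : |boolSign d * boolSign (v i) / (2 * σ)| ≤ 1 / σ / 2 := by
      rw [abs_div, abs_mul, abs_boolSign, abs_boolSign, abs_of_pos (by positivity), one_mul,
        div_div, mul_comm]
    simpa [signalDecoder, neg_div, ← sub_eq_add_neg] using
      abs_half_add_add_abs_half_sub_le (one_le_one_div hσ₀ hσ₁) habs
  | _ => simp [signalDecoder, hσ₀.le]

/-- An estimator of the indicator of the state `s` at some step from the observations at this step
and the next one, when the action in between reveals. The second observation serves only to tell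
the two sides of the coin apart. -/
def lockDecoder [DecidableEq X] (v : Fin n → Bool) (σ : ℝ) :
    LockState X → LockObs X n → LockObs X n → ℝ
  | .register x, o, _ => (Pi.single (.register x) 1 : LockObs X n → ℝ) o
  | .coin b, o, o' => (Pi.single .blank 1 : LockObs X n → ℝ) o * signalDecoder v σ b o'
  | .signal b, o, _ => signalDecoder v σ b o
  | .dead, o, _ => (Pi.single .dead 1 : LockObs X n → ℝ) o

lemma sum_abs_lockDecoder_le [DecidableEq X] [Fintype X] (v : Fin n → Bool) {σ : ℝ} (hσ₀ : 0 < σ)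
    (hσ₁ : σ ≤ 1) (o o' : LockObs X n) : ∑ s, |lockDecoder v σ s o o'| ≤ 1 / σ := by
  have hone := one_le_one_div hσ₀ hσ₁
  have hfirst := sum_abs_signalDecoder_le v hσ₀ hσ₁ o
  have hsecond := sum_abs_signalDecoder_le v hσ₀ hσ₁ o'
  rw [LockState.sum_univ]
  cases o with
  | signal => simpa [lockDecoder] using hfirst
  | blank => simpa [lockDecoder, signalDecoder] using hsecond
  | success => simpa [lockDecoder, signalDecoder] using hσ₀.le
  | _ => simpa [lockDecoder, signalDecoder, Pi.single_apply, apply_ite abs] using hone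

lemma lockDecoder_congr_of_ne_blank [DecidableEq X] (v : Fin n → Bool) (σ : ℝ) (s : LockState X)
    {o : LockObs X n} (ho : o ≠ .blank) (o' o'' : LockObs X n) :
    lockDecoder v σ s o o' = lockDecoder v σ s o o'' := by
  cases s <;> simp [lockDecoder, ho]

variable {k w L r A : ℕ}

lemma sum_lockEmit_mul_lockDecoder [NeZero n] {H : ℕ} (v : Fin n → Bool) {σ : ℝ} (hσ : σ ≠ 0)
    (θ : LockKey k w L r A) (ε : ℝ) {h : ℕ} (hh : h ≠ H) {a : Fin A} (ha : a.1 < r)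
    (s t : LockState (Fin (2 ^ k))) :
    ∑ o, lockEmit H v σ h t o * ∑ t', lockTrans θ ε h t a t' *
      ∑ o', lockEmit H v σ (h + 1) t' o' * lockDecoder v σ s o o' = if s = t then 1 else 0 := by
  have hforget (ht : lockEmit H v σ h t .blank = 0) :
      ∑ o, lockEmit H v σ h t o * ∑ t', lockTrans θ ε h t a t' *
          ∑ o', lockEmit H v σ (h + 1) t' o' * lockDecoder v σ s o o' =
        ∑ o, lockEmit H v σ h t o * lockDecoder v σ s o o := by
    refine sum_congr rfl fun o _ => ?_
    by_cases ho : o = .blank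
    · rw [ho, ht, zero_mul, zero_mul]
    · simp only [lockDecoder_congr_of_ne_blank v σ s ho _ o, ← sum_mul, sum_lockEmit,
        sum_lockTrans, one_mul]
  cases t with
  | coin b =>
    simp only [lockEmit, hh, false_and, if_false, lockTrans, ha, if_true, sum_single_one_mul]
    cases s with
    | coin c => simp [lockDecoder, sum_signalLaw_mul_signalDecoder, hσ]
    | _ => simp [lockDecoder, signalDecoder]
  | signal b =>
    rw [hforget rfl]
    cases s with
    | signal c => simp [lockDecoder, lockEmit, sum_signalLaw_mul_signalDecoder, hσ]
    | _ => simp [lockDecoder, lockEmit, sum_signalLaw_mul]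
  | _ =>
    rw [hforget (by simp [lockEmit])]
    cases s <;> simp [lockDecoder, lockEmit, signalDecoder, Pi.single_apply, eq_comm]

variable {State Obs : Type} [Fintype State] [Fintype Obs] [NeZero n]

/-- There are `r * A ^ m` action sequences that begin with a reveal, and averaging the decoder over
them gains the square root of their number. -/
lemma isRevealing_combinationLock (e : State ≃ LockState (Fin (2 ^ k)))
    (eo : Obs ≃ LockObs (Fin (2 ^ k)) n) {σ : ℝ} (hσ : |σ| ≤ 1) (θ : LockKey k w L r A)
    (v : Fin n → Bool) {ε : ℝ} (hε : |ε| ≤ 1 / 2) (hr₀ : 0 < r) (hr : r ≤ A) {m : ℕ}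
    (hm : m + 2 ≤ k + w + L + 1) {α : ℝ} (hα : 0 < α) (hσ₀ : 0 < σ)
    (hσα : α ≤ σ * √(r * (A : ℝ) ^ m)) :
    (combinationLock e eo hσ θ v hε).IsRevealing (m + 2) α := by
  classical
  have hcard : #{a : Fin A | a.1 < r} = r := by rw [Fin.card_filter_val_lt, min_eq_right hr]
  refine POMDP.isRevealing_of_decoder _ (R := {a : Fin A | a.1 < r})
    (d := fun s o o' => lockDecoder v σ (e s) (eo o) (eo o')) (C := 1 / σ)
    (card_pos.1 (hcard.symm ▸ hr₀)) hα (by positivity) (fun h hh a ha s t => ?_)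
    (fun o o' => ?_) ?_
  · rw [mem_Icc] at hh
    have hunbiased := sum_lockEmit_mul_lockDecoder v hσ₀.ne' θ ε
      (show h ≠ k + w + L + 1 by omega) (mem_filter.1 ha).2 (e s) (e t)
    simp only [e.injective.eq_iff, ← eo.sum_comp, ← e.sum_comp] at hunbiased
    exact hunbiased
  · rw [e.sum_comp fun s => |lockDecoder v σ s (eo o) (eo o')|]
    exact sum_abs_lockDecoder_le v hσ₀ ((le_abs_self σ).trans hσ) _ _
  · rwa [hcard, Fintype.card_fin, one_div_mul_eq_div, div_le_iff₀' hσ₀]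

end LockDecoder

/-! ### Choice of the parameters -/

section LockSizes

lemma card_actions_ge (A r : ℕ) : Fintype.card {a : Fin A // r ≤ a} = A - r := by
  simp only [← not_lt]
  rw [Fintype.card_subtype_compl, Fintype.card_fin, Fintype.card_subtype, Fin.card_filter_val_lt]
  omega

lemma pow_five_le_sub_div_three_pow_eight {A : ℕ} (hA : 3 ≤ A) : A ^ 5 ≤ (A - A / 3) ^ 8 := by
  obtain ⟨K, hK⟩ : ∃ K, K = A - A / 3 := ⟨_, rfl⟩
  rw [← hK]
  refine Nat.le_of_mul_le_mul_left ?_ (show 0 < 6561 by norm_num)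
  calc 6561 * A ^ 5 ≤ 256 * A ^ 3 * A ^ 5 := by
        gcongr
        calc 6561 ≤ 256 * 3 ^ 3 := by norm_num
          _ ≤ _ := by gcongr
    _ = (2 * A) ^ 8 := by ring
    _ ≤ (3 * K) ^ 8 := by gcongr ?_ ^ 8; omega
    _ = 6561 * K ^ 8 := by ring

lemma rpow_half_le_sub_div_three_pow {A L H : ℕ} (hA : 3 ≤ A) (hL : 4 * H ≤ 5 * L) :
    (A : ℝ) ^ ((H : ℝ) / 2) ≤ ((A - A / 3 : ℕ) : ℝ) ^ L := by
  have hpow : A ^ (5 * H) ≤ (A - A / 3) ^ (L * 10) := by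
    calc A ^ (5 * H) = (A ^ 5) ^ H := pow_mul _ _ _
      _ ≤ ((A - A / 3) ^ 8) ^ H := Nat.pow_le_pow_left (pow_five_le_sub_div_three_pow_eight hA) H
      _ = (A - A / 3) ^ (8 * H) := (pow_mul _ _ _).symm
      _ ≤ (A - A / 3) ^ (L * 10) := Nat.pow_le_pow_right (by omega) (by omega)
  refine le_of_pow_le_pow_left₀ (n := 10) (by norm_num) (by positivity) ?_
  rw [← pow_mul, ← Real.rpow_mul_natCast (Nat.cast_nonneg A),
    show (H : ℝ) / 2 * (10 : ℕ) = ((5 * H : ℕ) : ℝ) by push_cast; ring, Real.rpow_natCast]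
  exact_mod_cast hpow

variable {k w L A : ℕ}

lemma card_location : Fintype.card (Location k w A) = w * (2 ^ k * (A - 2)) := by
  simp

lemma card_lockKey (r : ℕ) :
    Fintype.card (LockKey k w L r A) = Fintype.card (Location k w A) * (A - r) ^ L := by
  rw [Fintype.card_prod, Fintype.card_fun, card_actions_ge, Fintype.card_fin]

lemma mul_mul_le_mul_card_location {S H : ℕ} (hS : S ≤ 8 * 2 ^ k) (hA : 3 ≤ A)
    (hH : H ≤ 20 * w) : S * A * H ≤ 480 * Fintype.card (Location k w A) := by
  calc S * A * H ≤ (8 * 2 ^ k) * (3 * (A - 2)) * (20 * w) := by gcongr; omega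
    _ = 480 * Fintype.card (Location k w A) := by rw [card_location]; ring

lemma mul_rpow_half_mul_le_mul_card_lockKey {S H : ℕ} (hS : S ≤ 8 * 2 ^ k) (hA : 3 ≤ A)
    (hH : H ≤ 20 * w) (hL : 4 * H ≤ 5 * L) :
    (S : ℝ) * (A : ℝ) ^ ((H : ℝ) / 2) * H ≤ 480 * Fintype.card (LockKey k w L (A / 3) A) := by
  have hloc : (S : ℝ) * H ≤ 480 * Fintype.card (Location k w A) := by
    refine le_trans ?_ (Nat.cast_le.2 (mul_mul_le_mul_card_location hS hA hH) |>.trans_eq ?_)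
      (b := ((S * A * H : ℕ) : ℝ))
    · exact_mod_cast Nat.mul_le_mul_right H (Nat.le_mul_of_pos_right S (by omega))
    · push_cast; rfl
  calc (S : ℝ) * (A : ℝ) ^ ((H : ℝ) / 2) * H = S * H * (A : ℝ) ^ ((H : ℝ) / 2) := by ring
    _ ≤ 480 * Fintype.card (Location k w A) * ((A - A / 3 : ℕ) : ℝ) ^ L := by
      gcongr; exact rpow_half_le_sub_div_three_pow hA hL
    _ = 480 * Fintype.card (LockKey k w L (A / 3) A) := by
      rw [card_lockKey]; push_cast; ring

lemma eight_le_card_lockKey (hw : 0 < w) (hL : 3 ≤ L) (hA : 3 ≤ A) :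
    8 ≤ Fintype.card (LockKey k w L (A / 3) A) := by
  have hletters : 2 ≤ A - A / 3 := by omega
  have hloc : 0 < Fintype.card (Location k w A) := by
    rw [card_location]; have := Nat.sub_pos_of_lt hA; positivity
  calc 8 = 1 * 2 ^ 3 := by norm_num
    _ ≤ Fintype.card (Location k w A) * (A - A / 3) ^ L := by
      refine Nat.mul_le_mul hloc ((Nat.pow_le_pow_left hletters 3).trans ?_)
      exact Nat.pow_le_pow_right (by omega) hL
    _ = _ := (card_lockKey _).symm

lemma mul_sqrt_mul_pow_mul_le {S O H n : ℕ} (hS : S ≤ 8 * 2 ^ k) (hO : O ≤ 16 * n) (hA : 3 ≤ A)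
    (hH : H ≤ 20 * w) (m : ℕ) :
    (S : ℝ) * √O * (A : ℝ) ^ (m + 2) * H ≤
      9600 * (Fintype.card (Location k w A) * √n * ((A / 3 : ℕ) * (A : ℝ) ^ m)) := by
  have hloc : (S : ℝ) * A * H ≤ 480 * Fintype.card (Location k w A) := by
    exact_mod_cast mul_mul_le_mul_card_location hS hA hH
  have hreveal : (A : ℝ) ≤ 5 * (A / 3 : ℕ) := by exact_mod_cast (by omega : A ≤ 5 * (A / 3))
  have hsqrt : √O ≤ 4 * √n := by
    rw [show (4 : ℝ) = √16 by rw [show (16 : ℝ) = 4 ^ 2 by norm_num]; simp,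
      ← Real.sqrt_mul (by norm_num)]
    exact Real.sqrt_le_sqrt (by exact_mod_cast hO)
  calc (S : ℝ) * √O * (A : ℝ) ^ (m + 2) * H = (S * A * H) * √O * (A * (A : ℝ) ^ m) := by ring
    _ ≤ (480 * Fintype.card (Location k w A)) * (4 * √n) * ((5 * (A / 3 : ℕ)) * (A : ℝ) ^ m) := by
      gcongr
    _ = _ := by ring

/-- The register part gets `k + w` steps, of which `w ≈ H / 20` can hold the hidden location, and
the password gets `L ≥ 4 H / 5` steps. -/
lemma exists_lock_dimensions {m S H : ℕ} (hS : 8 ≤ S) (hH : 8 * Real.logb 2 S + 2 * m ≤ (H : ℝ)) :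
    ∃ k w L, H = k + w + L + 1 ∧ 4 * 2 ^ k ≤ S ∧ S ≤ 8 * 2 ^ k ∧ H ≤ 20 * w ∧ 4 * H ≤ 5 * L ∧
      m ≤ H := by
  have hlog : 3 ≤ Nat.log 2 S := Nat.le_log_of_pow_le (by norm_num) (by omega)
  obtain ⟨k, hk⟩ : ∃ k, Nat.log 2 S = k + 2 := ⟨Nat.log 2 S - 2, by omega⟩
  have hlower := Nat.pow_log_le_self 2 (show S ≠ 0 by omega)
  have hupper := Nat.lt_pow_succ_log_self (b := 2) (by norm_num) S
  rw [hk, pow_add] at hlower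
  rw [hk, Nat.succ_eq_add_one, pow_add, pow_add] at hupper
  have hhorizon : 8 * (k + 2) + 2 * m ≤ H := by
    have := Real.natLog_le_logb S 2
    rw [hk] at this
    exact_mod_cast (show (8 * ((k + 2 : ℕ) : ℝ) + 2 * m) ≤ H by push_cast at this ⊢; linarith)
  exact ⟨k, H / 20 + 1, H - 1 - k - (H / 20 + 1), by omega, by omega, by omega, by omega,
    by omega, by omega⟩

end LockSizes

section LockFamily

variable {k w L n A : ℕ} {State Obs : Type} [Fintype State] [Fintype Obs] [NeZero n]
  (e : State ≃ LockState (Fin (2 ^ k))) (eo : Obs ≃ LockObs (Fin (2 ^ k)) n)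

/-- About `√n / (ε σ)²` reveals at the right location, or `1 / ε²` episodes with the right password,
leave the mixture over the secrets close to the null instance. -/
lemma le_expRegret_null_or_exists_le_of_bias {σ ε B : ℝ} (hσ : |σ| ≤ 1) (hσ₀ : 0 < σ)
    (hε₀ : 0 < ε) (hε₁ : ε ≤ 1 / 20) {r : ℕ} (θ₀ : LockKey k w L r A) (v₀ : Fin n → Bool)
    (hε : |ε| ≤ 1 / 2) (hA : 3 ≤ A) (hr : r < A) (hΘ : 8 ≤ Fintype.card (LockKey k w L r A))
    {T : ℕ} (hT : 3200 * ε ^ 2 * T ≤ Fintype.card (LockKey k w L r A))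
    (hB₁ : 12800 * ε ^ 2 * σ ^ 2 * B ≤ Fintype.card (Location k w A) * √n)
    (hB₂ : B ≤ 3 / 8 * ε * T) (𝔄 : Algorithm Obs (Fin A) (k + w + L + 1)) :
    B ≤ (nullLock e eo hσ θ₀ v₀).expRegret 𝔄 T ∨
      ∃ (θ : LockKey k w L r A) (v : Fin n → Bool),
        B ≤ (combinationLock e eo hσ θ v hε).expRegret 𝔄 T := by
  have hsqrt : 1 ≤ √(n : ℝ) := Real.one_le_sqrt.2 (by exact_mod_cast NeZero.one_le)
  have hεsq : ε ^ 2 ≤ 1 / 400 := by nlinarith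
  have hσsq : σ ^ 2 ≤ 1 := (sq_le_one_iff_abs_le_one σ).2 hσ
  have hreveals : 1 ≤ √(n : ℝ) / (400 * ε ^ 2 * σ ^ 2) := by
    rw [le_div_iff₀ (by positivity)]; nlinarith [sq_nonneg σ]
  have hentries : 1 ≤ 1 / (200 * ε ^ 2) := by
    rw [le_div_iff₀ (by positivity)]; linarith
  have hn₁ := Nat.div_two_lt_floor hreveals
  have hn₂ := Nat.div_two_lt_floor hentries
  refine le_expRegret_null_or_exists_le e eo hσ θ₀ v₀ hε hA hr hε₀.le
    (Nat.floor_pos.2 hreveals) (Nat.floor_pos.2 hentries)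
    (sum_sum_signalCrossBound_pow_mul_le (sq_nonneg _) ?_ ?_) hΘ ?_ ?_ hB₂ 𝔄
  · calc (⌊√(n : ℝ) / (400 * ε ^ 2 * σ ^ 2)⌋₊ : ℝ) * (2 * ε * σ) ^ 2
        ≤ √n / (400 * ε ^ 2 * σ ^ 2) * (2 * ε * σ) ^ 2 := by
          gcongr; exact Nat.floor_le (by positivity)
      _ = √n / 100 := by field_simp; norm_num
  · calc 4 * ε ^ 2 * (⌊1 / (200 * ε ^ 2)⌋₊ : ℝ) ≤ 4 * ε ^ 2 * (1 / (200 * ε ^ 2)) := by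
          gcongr; exact Nat.floor_le (by positivity)
      _ = 1 / 50 := by field_simp; norm_num
  · calc 8 * (T : ℝ) = 3200 * ε ^ 2 * T * (1 / (200 * ε ^ 2) / 2) := by field_simp; ring
      _ ≤ _ := by gcongr
  · calc B = 12800 * ε ^ 2 * σ ^ 2 * B / (12800 * ε ^ 2 * σ ^ 2) := by field_simp
      _ ≤ Fintype.card (Location k w A) * √n / (12800 * ε ^ 2 * σ ^ 2) := by gcongr
      _ = Fintype.card (Location k w A) * (√n / (400 * ε ^ 2 * σ ^ 2) / 2) / 16 := by
        field_simp; ring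
      _ ≤ _ := by gcongr

include e eo

lemma exists_finite_revealing_le_expRegret_of_bias {σ ε B : ℝ} (hσ₀ : 0 < σ) (hσ₁ : σ ≤ 1)
    (hε₀ : 0 < ε) (hε₁ : ε ≤ 1 / 20) {r : ℕ} (hr₀ : 0 < r) (hr : r < A) (hA : 3 ≤ A) {m : ℕ}
    (hm : m + 2 ≤ k + w + L + 1) {α : ℝ} (hα : 0 < α) (hσα : α ≤ σ * √(r * (A : ℝ) ^ m))
    (hΘ : 8 ≤ Fintype.card (LockKey k w L r A)) {T : ℕ}
    (hT : 3200 * ε ^ 2 * T ≤ Fintype.card (LockKey k w L r A))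
    (hB₁ : 12800 * ε ^ 2 * σ ^ 2 * B ≤ Fintype.card (Location k w A) * √n)
    (hB₂ : B ≤ 3 / 8 * ε * T) :
    ∃ ℳ : Set (POMDP State Obs (Fin A) (k + w + L + 1)), ℳ.Finite ∧
      (∀ M ∈ ℳ, M.IsRevealing (m + 2) α) ∧
      ∀ 𝔄 : Algorithm Obs (Fin A) (k + w + L + 1), ∃ M ∈ ℳ, B ≤ M.expRegret 𝔄 T := by
  have hσ : |σ| ≤ 1 := by rwa [abs_of_pos hσ₀]
  have hε : |ε| ≤ 1 / 2 := by rw [abs_of_pos hε₀]; linarith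
  obtain ⟨θ₀⟩ : Nonempty (LockKey k w L r A) := Fintype.card_pos_iff.1 (by omega)
  let v₀ : Fin n → Bool := fun _ => true
  have hrevealing (θ : LockKey k w L r A) (v : Fin n → Bool) {ε : ℝ} (hε : |ε| ≤ 1 / 2) :
      (combinationLock e eo hσ θ v hε).IsRevealing (m + 2) α :=
    isRevealing_combinationLock e eo hσ θ v hε hr₀ hr.le hm hα hσ₀ hσα
  refine ⟨insert (nullLock e eo hσ θ₀ v₀)
    (Set.range fun p : LockKey k w L r A × (Fin n → Bool) =>
      combinationLock e eo hσ p.1 p.2 hε), (Set.finite_range _).insert _, ?_, fun 𝔄 => ?_⟩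
  · rintro M (rfl | ⟨p, rfl⟩)
    exacts [hrevealing θ₀ v₀ _, hrevealing p.1 p.2 hε]
  · rcases le_expRegret_null_or_exists_le_of_bias e eo hσ hσ₀ hε₀ hε₁ θ₀ v₀ hε hA hr hΘ hT hB₁
      hB₂ 𝔄 with h | ⟨θ, v, h⟩
    exacts [⟨_, .inl rfl, h⟩, ⟨_, .inr ⟨(θ, v), rfl⟩, h⟩]

/-- The bias of the family is `ε = x / (1250 T)`, proportional to the target regret per episode. -/
theorem exists_finite_revealing_le_expRegret {m S O H T : ℕ} (hS : S ≤ 8 * 2 ^ k)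
    (hO : O ≤ 16 * n) (hA : 3 ≤ A) (hH : H = k + w + L + 1) (hw : H ≤ 20 * w)
    (hL : 4 * H ≤ 5 * L) (hm : m + 2 ≤ H) {α : ℝ} (hα : 0 < α) (hα₁ : α ≤ 1) {x : ℝ}
    (hx : 0 < x) (hxT : x ≤ T) (hx₂ : x ^ 2 ≤ S * (A : ℝ) ^ ((H : ℝ) / 2) * H * T)
    (hx₃ : x ^ 3 ≤ S * √O * (A : ℝ) ^ (m + 2) * H / α ^ 2 * (T : ℝ) ^ 2) :
    ∃ ℳ : Set (POMDP State Obs (Fin A) H), ℳ.Finite ∧ (∀ M ∈ ℳ, M.IsRevealing (m + 2) α) ∧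
      ∀ 𝔄 : Algorithm Obs (Fin A) H, ∃ M ∈ ℳ, x / 4000 ≤ M.expRegret 𝔄 T := by
  have hkey := mul_rpow_half_mul_le_mul_card_lockKey hS hA hw hL
  have hlocation := mul_sqrt_mul_pow_mul_le hS hO hA hw m
  subst hH
  have hT₀ : (0 : ℝ) < T := hx.trans_le hxT
  set N : ℝ := (A / 3 : ℕ) * (A : ℝ) ^ m with hN
  have hsqrtN : 1 ≤ √N := by
    rw [Real.one_le_sqrt, hN]
    exact_mod_cast Nat.mul_pos (by omega : 0 < A / 3) (pow_pos (by omega) m)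
  obtain ⟨σ, rfl⟩ : ∃ σ, α = σ * √N := ⟨α / √N, by field_simp⟩
  have hσ₀ : 0 < σ := pos_of_mul_pos_left hα (by positivity)
  obtain ⟨ε, rfl⟩ : ∃ ε, x = 1250 * ε * T := ⟨x / (1250 * T), by field_simp⟩
  have hε₀ : 0 < ε := by
    rw [mul_assoc] at hx
    exact pos_of_mul_pos_left (pos_of_mul_pos_right hx (by norm_num)) hT₀.le
  have hN₀ : 0 < N := Real.sqrt_pos.1 (by linarith)
  refine exists_finite_revealing_le_expRegret_of_bias e eo hσ₀
    ((le_mul_of_one_le_right hσ₀.le hsqrtN).trans hα₁) hε₀ ?_ (by omega : 0 < A / 3) (by omega) hA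
    hm hα le_rfl (eight_le_card_lockKey (by omega) (by omega) hA) ?_ ?_ ?_
  · have := le_of_mul_le_mul_right (hxT.trans_eq (one_mul _).symm) hT₀
    linarith
  · have hentries : (1250 ^ 2 * (ε ^ 2 * T)) * T ≤
        480 * Fintype.card (LockKey k w L (A / 3) A) * T := by
      calc _ = (1250 * ε * T) ^ 2 := by ring
        _ ≤ _ := hx₂.trans (by gcongr)
    have := le_of_mul_le_mul_right hentries hT₀
    have : 0 < ε ^ 2 * T := by positivity
    linarith
  · have hreveals : (1250 ^ 3 * (ε ^ 3 * σ ^ 2 * T)) * (N * T ^ 2) ≤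
        9600 * (Fintype.card (Location k w A) * √n) * (N * T ^ 2) := by
      rw [mul_pow σ, Real.sq_sqrt hN₀.le, div_mul_eq_mul_div, le_div_iff₀ (by positivity)] at hx₃
      calc _ = (1250 * ε * T) ^ 3 * (σ ^ 2 * N) := by ring
        _ ≤ 9600 * (Fintype.card (Location k w A) * √n * N) * T ^ 2 := hx₃.trans (by gcongr)
        _ = _ := by ring
    have := le_of_mul_le_mul_right hreveals (by positivity)
    have : 0 < ε ^ 3 * σ ^ 2 * T := by positivity
    linarith
  · have : 0 < ε * T := by positivity
    linarith

end LockFamily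

lemma rpow_one_third_mul_rpow_two_thirds_pow_three {x y : ℝ} (hx : 0 ≤ x) (hy : 0 ≤ y) :
    (x ^ ((1 : ℝ) / 3) * y ^ ((2 : ℝ) / 3)) ^ 3 = x * y ^ 2 := by
  rw [mul_pow, ← Real.rpow_mul_natCast hx, ← Real.rpow_mul_natCast hy, ← Real.rpow_natCast y]
  norm_num

theorem multi_step_revealing_regret_lower_bound_general (m S O A H : ℕ) (hm : 2 ≤ m) (hS : 8 ≤ S)
    (hSO : S ≤ O) (hA : 3 ≤ A) (hH : 8 * Real.logb 2 S + 2 * m ≤ (H : ℝ)) (α : ℝ) (hα₀ : 0 < α)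
    (hα₁ : α ≤ 1) (T : ℕ) (hT : 1 ≤ T) :
    ∃ (σ ω : ℕ), 0 < σ ∧ σ ≤ S ∧ 0 < ω ∧ ω ≤ O ∧
      ∃ ℳ : Set (POMDP (Fin σ) (Fin ω) (Fin A) H), ℳ.Finite ∧
        (∀ M ∈ ℳ, M.IsRevealing m α) ∧
        ∀ 𝔄 : Algorithm (Fin ω) (Fin A) H, ∃ M ∈ ℳ,
          1 / 4000 *
              min
                (((S : ℝ) * Real.sqrt O * (A : ℝ) ^ m * H / α ^ 2) ^ ((1 : ℝ) / 3) *
                  (T : ℝ) ^ ((2 : ℝ) / 3))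
                (min (Real.sqrt ((S : ℝ) * (A : ℝ) ^ ((H : ℝ) / 2) * H * T)) (T : ℝ)) ≤
            M.expRegret 𝔄 T := by
  obtain ⟨k, w, L, hsplit, hkS, hSk, hw, hL, hmH⟩ := exists_lock_dimensions hS hH
  obtain ⟨m, rfl⟩ := Nat.exists_eq_add_of_le' hm
  obtain ⟨n, hn⟩ : ∃ n, n = O / 8 := ⟨_, rfl⟩
  have : NeZero n := ⟨by omega⟩
  have hcardS := LockState.card_eq (X := Fin (2 ^ k))
  have hcardO := LockObs.card_eq (X := Fin (2 ^ k)) (n := n)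
  rw [Fintype.card_fin] at hcardS hcardO
  set Q : ℝ := (S : ℝ) * √O * (A : ℝ) ^ (m + 2) * H / α ^ 2
  set P : ℝ := (S : ℝ) * (A : ℝ) ^ ((H : ℝ) / 2) * H * T
  set x := min (Q ^ ((1 : ℝ) / 3) * (T : ℝ) ^ ((2 : ℝ) / 3)) (min √P T)
  have hO₀ : 0 < O := by omega
  have hH₀ : 0 < H := by omega
  have hQ : 0 < Q := by positivity
  have hP : 0 < P := by positivity
  have hx : 0 < x := by positivity
  simp only [one_div_mul_eq_div]
  refine ⟨_, _, by omega, by omega, by omega, by omega, exists_finite_revealing_le_expRegret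
    (Fintype.equivFin (LockState (Fin (2 ^ k)))).symm
    (Fintype.equivFin (LockObs (Fin (2 ^ k)) n)).symm hSk (by omega : O ≤ 16 * n) hA hsplit hw hL
    hmH hα₀ hα₁ hx ((min_le_right _ _).trans (min_le_right _ _)) ?_ ?_⟩
  · exact (Real.le_sqrt hx.le hP.le).1 ((min_le_right _ _).trans (min_le_left _ _))
  · rw [← rpow_one_third_mul_rpow_two_thirds_pow_three hQ.le (Nat.cast_nonneg T)]
    exact pow_le_pow_left₀ hx.le (min_le_left _ _) 3

/-- **`Ω(T^{2/3})` regret lower bound for multi-step revealing POMDPs** (Theorem 4.1).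
There is an absolute constant `c₀ > 0` such that for all `m ≥ 2`, `O ≥ S ≥ 8`, `A ≥ 3`,
`H ≥ 8 log₂ S + 2m`, `α ∈ (0, 0.1]` and `T ≥ 1`, there is a finite family `ℳ` of `m`-step
`α`-revealing POMDPs with `|𝒮| ≤ S`, `|𝒪| ≤ O`, `|𝒜| = A` such that every `T`-episode
algorithm suffers expected regret at least
`(c₀/m) · min{ (S·√O·A^m·H/α²)^{1/3}·T^{2/3}, (S·A^{H/2}·H·T)^{1/2}, T }`
on some member of `ℳ`. -/
theorem multi_step_revealing_regret_lower_bound :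
    ∃ c₀ : ℝ, 0 < c₀ ∧
      ∀ (m S O A H : ℕ), 2 ≤ m → 8 ≤ S → S ≤ O → 3 ≤ A →
        8 * Real.logb 2 S + 2 * m ≤ (H : ℝ) →
        ∀ α : ℝ, 0 < α → α ≤ 0.1 →
        ∀ T : ℕ, 1 ≤ T →
        ∃ (σ ω : ℕ), 0 < σ ∧ σ ≤ S ∧ 0 < ω ∧ ω ≤ O ∧
          ∃ ℳ : Set (POMDP (Fin σ) (Fin ω) (Fin A) H),
            ℳ.Finite ∧
            (∀ M ∈ ℳ, M.IsRevealing m α) ∧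
            ∀ 𝔄 : Algorithm (Fin ω) (Fin A) H,
              ∃ M ∈ ℳ,
                (c₀ / m) *
                    min
                      (((S : ℝ) * Real.sqrt O * (A : ℝ) ^ m * H / α ^ 2) ^ ((1 : ℝ) / 3) *
                        (T : ℝ) ^ ((2 : ℝ) / 3))
                      (min (Real.sqrt ((S : ℝ) * (A : ℝ) ^ ((H : ℝ) / 2) * H * T)) (T : ℝ)) ≤
                  M.expRegret 𝔄 T := by
  refine ⟨1 / 4000, by norm_num, fun m S O A H hm hS hSO hA hH α hα₀ hα₁ T hT => ?_⟩
  obtain ⟨σ, ω, hσ₀, hσ, hω₀, hω, ℳ, hfin, hrev, hreg⟩ :=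
    multi_step_revealing_regret_lower_bound_general m S O A H hm hS hSO hA hH α hα₀
      (hα₁.trans (by norm_num)) T hT
  have hdiv : (1 / 4000 / m : ℝ) ≤ 1 / 4000 :=
    div_le_self (by norm_num) (by exact_mod_cast one_le_two.trans hm)
  exact ⟨σ, ω, hσ₀, hσ, hω₀, hω, ℳ, hfin, hrev, fun 𝔄 => (hreg 𝔄).imp fun M hM =>
    ⟨hM.1, (mul_le_mul_of_nonneg_right hdiv (by positivity)).trans hM.2⟩⟩
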